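/- Let p ≥ 3 be a prime number. For every integer n ≥ p, the number of Dyck paths of semilength n with L = p is |D_n^p| = 2·( T_{n-2, p-1} + Σ_{i=0}^{n-2-p} (i+1)·M_i·T_{n-4-i, p-1} ), where the sum is empty when n-2-p < 0. -/

import Mathlib

/-- A Dyck path of semilength `n`, encoded as a word on `Bool`
(`true` = up step `u`, `false` = down step `d`). -/
def IsDyckWord (n : ℕ) (w : List Bool) : Prop :=
  w.length = 2 * n ∧ w.count true = n ∧ w.count false = n ∧
    ∀ p : List Bool, p <+: w → p.count false ≤ p.count true

/-- The (0-based) indices of the up steps of `w`. -/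
def upIdxs (w : List Bool) : List ℕ := w.findIdxs (· == true)

/-- The (0-based) indices of the down steps of `w`. -/
def downIdxs (w : List Bool) : List ℕ := w.findIdxs (· == false)

/-- `rStat w i` is the number of `d`'s strictly between the `i`-th and the
`(i+1)`-st `u` of `w` (with `i` 1-indexed). -/
def rStat (w : List Bool) (i : ℕ) : ℕ :=
  ((w.take ((upIdxs w).getD i 0)).drop ((upIdxs w).getD (i - 1) 0 + 1)).count false

/-- `sStat w i` is the number of `u`'s strictly between the `i`-th and the
`(i+1)`-st `d` of `w` (with `i` 1-indexed). -/
def sStat (w : List Bool) (i : ℕ) : ℕ :=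
  ((w.take ((downIdxs w).getD i 0)).drop ((downIdxs w).getD (i - 1) 0 + 1)).count true

/-- The statistic `L(D) = ∏_{i=1}^{n-1} C(r_i + s_i, r_i)` of a Dyck path of semilength `n`. -/
def LStat (n : ℕ) (w : List Bool) : ℕ :=
  ∏ i ∈ Finset.Icc 1 (n - 1), Nat.choose (rStat w i + sStat w i) (rStat w i)

/-- `dyckL n k` = the set `𝒟ₙᵏ` of Dyck paths of semilength `n` with `L(D) = k`. -/
def dyckL (n k : ℕ) : Set (List Bool) := {w | IsDyckWord n w ∧ LStat n w = k}

/-- A Motzkin path, encoded as a word on `Option Bool`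
(`some true` = up, `some false` = down, `none` = horizontal). -/
def IsMotzkinWord (w : List (Option Bool)) : Prop :=
  w.count (some false) = w.count (some true) ∧
    ∀ p : List (Option Bool), p <+: w → p.count (some false) ≤ p.count (some true)

/-- `motzkin n` = the `n`-th Motzkin number `Mₙ`, the number of Motzkin paths of length `n`. -/
noncomputable def motzkin (n : ℕ) : ℕ :=
  {w : List (Option Bool) | w.length = n ∧ IsMotzkinWord w}.ncard

/-- The Motzkin ballot number `T_{n,k}`: the number of Motzkin paths of length `n`
whose first down step is in position `k` (1-indexed); by convention `T_{k-1,k} = 1`,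
counting the path of `k-1` horizontal steps. -/
noncomputable def motzkinBallot (n k : ℕ) : ℕ :=
  if n + 1 = k then 1
  else
    {w : List (Option Bool) | w.length = n ∧ IsMotzkinWord w ∧
      w.getD (k - 1) none = some false ∧ ∀ j < k - 1, w.getD j none ≠ some false}.ncard

/-- Motzkin numbers with integer index: `Mᵢ = 0` for `i < 0`. -/
noncomputable def motzkinZ (i : ℤ) : ℤ := if 0 ≤ i then (motzkin i.toNat : ℤ) else 0

/-- Motzkin ballot numbers with integer first index: `T_{n,k} = 0` for `n < 0`. -/
noncomputable def motzkinBallotZ (n : ℤ) (k : ℕ) : ℤ :=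
  if 0 ≤ n then (motzkinBallot n.toNat k : ℤ) else 0

/-- The set of returns of a Dyck path `w` of semilength `n`:
indices `1 ≤ k ≤ n` such that the path touches the `x`-axis after `2k` steps. -/
def returns (n : ℕ) (w : List Bool) : Finset ℕ :=
  (Finset.Icc 1 n).filter fun k => (w.take (2 * k)).count false = (w.take (2 * k)).count true

/-- `dyckRS n r s` = the set `𝒟ₙ^{r,s}` of Dyck paths of semilength `n` having exactly one
index `i` with `rᵢ > 0` and `sᵢ > 0`, and such that at that index `rᵢ = r` and `sᵢ = s`. -/
def dyckRS (n r s : ℕ) : Set (List Bool) :=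
  {w | IsDyckWord n w ∧ ∃ i ∈ Finset.Icc 1 (n - 1),
    (0 < rStat w i ∧ 0 < sStat w i) ∧ rStat w i = r ∧ sStat w i = s ∧
      ∀ j ∈ Finset.Icc 1 (n - 1), 0 < rStat w j ∧ 0 < sStat w j → j = i}

/-- `twoStars n w k₁ k₂` says that `k₁ < k₂` are exactly the two indices `i` of `w`
with `rᵢ > 0` and `sᵢ > 0`. -/
def twoStars (n : ℕ) (w : List Bool) (k₁ k₂ : ℕ) : Prop :=
  k₁ ∈ Finset.Icc 1 (n - 1) ∧ k₂ ∈ Finset.Icc 1 (n - 1) ∧ k₁ < k₂ ∧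
    (0 < rStat w k₁ ∧ 0 < sStat w k₁) ∧ (0 < rStat w k₂ ∧ 0 < sStat w k₂) ∧
    ∀ j ∈ Finset.Icc 1 (n - 1), 0 < rStat w j ∧ 0 < sStat w j → j = k₁ ∨ j = k₂

/-- `xStat w k` = the number of indices `i < k` with `rᵢ = 0` and `sᵢ > 0`. -/
def xStat (w : List Bool) (k : ℕ) : ℕ :=
  ((Finset.Ico 1 k).filter fun i => rStat w i = 0 ∧ 0 < sStat w i).card

/-- `yStat w k` = the number of indices `i < k` with `rᵢ > 0` and `sᵢ = 0`. -/
def yStat (w : List Bool) (k : ℕ) : ℕ :=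
  ((Finset.Ico 1 k).filter fun i => 0 < rStat w i ∧ sStat w i = 0).card

/-- The generating function `m(x) = Σ Mₙ xⁿ` of the Motzkin numbers, over `ℚ`. -/
noncomputable def motzkinGF : PowerSeries ℚ := PowerSeries.mk fun n => (motzkin n : ℚ)
open PowerSeries

/-- `Walk h W k`: the word `W` is a lattice walk from height `h` to height `k` that never goes
below height `0`. -/
def Walk : ℕ → List (Option Bool) → ℕ → Prop
  | h, [], k => h = k
  | h, none :: W, k => Walk h W k
  | h, some true :: W, k => Walk (h + 1) W k
  | 0, some false :: _, _ => False
  | h + 1, some false :: W, k => Walk h W k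

theorem walk_append (A B : List (Option Bool)) (h k : ℕ) :
    Walk h (A ++ B) k ↔ ∃ j, Walk h A j ∧ Walk j B k := by
  induction A generalizing h with
  | nil => simp [Walk]
  | cons a A ih =>
    rcases a with _ | _ | _ <;> rcases h with _ | h <;> simp [Walk, ih]

theorem Walk.count_eq {W : List (Option Bool)} {h k : ℕ} (hW : Walk h W k) :
    h + W.count (some true) = k + W.count (some false) := by
  induction W generalizing h with
  | nil => simpa [Walk] using hW
  | cons a W ih =>
    rcases a with _ | _ | _ <;> rcases h with _ | h <;> simp only [Walk] at hW <;>
      first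
      | exact hW.elim
      | (have := ih hW; simp; omega)

/-- Adding to the starting height at least as many steps as there are down steps makes any word
a walk. -/
theorem walk_of_count_le {W : List (Option Bool)} {h k : ℕ} (hle : W.count (some false) ≤ h)
    (heq : h + W.count (some true) = k + W.count (some false)) : Walk h W k := by
  induction W generalizing h with
  | nil => simpa [Walk] using heq
  | cons a W ih =>
    rcases a with _ | _ | _ <;> rcases h with _ | h <;> simp [Walk] at * <;> apply ih <;> omega

theorem walk_iff_prefix (W : List (Option Bool)) (h k : ℕ) :
    Walk h W k ↔ h + W.count (some true) = k + W.count (some false) ∧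
      ∀ p : List (Option Bool), p <+: W → p.count (some false) ≤ h + p.count (some true) := by
  constructor
  · intro hW
    refine ⟨hW.count_eq, ?_⟩
    rintro p ⟨q, rfl⟩
    obtain ⟨j, hj, -⟩ := (walk_append _ _ _ _).1 hW
    have := hj.count_eq
    omega
  · induction W generalizing h with
    | nil => simp [Walk]
    | cons a W ih =>
      rintro ⟨h1, h2⟩
      have h3 : ∀ p, p <+: W → (a :: p).count (some false) ≤ h + (a :: p).count (some true) :=
        fun p hp => h2 _ (by simpa using hp)
      have h4 := h3 [] (by simp)
      rcases a with _ | _ | _ <;> rcases h with _ | h <;> simp [Walk] at * <;> apply ih <;>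
        first
        | omega
        | (intro p hp; have := h3 p hp; omega)

theorem isMotzkinWord_iff_walk (W : List (Option Bool)) : IsMotzkinWord W ↔ Walk 0 W 0 := by
  rw [walk_iff_prefix, IsMotzkinWord]
  simp [eq_comm]

/-- The length generating function of a set of words. -/
noncomputable def gf (S : Set (List (Option Bool))) : PowerSeries ℤ :=
  PowerSeries.mk fun n => ({W | W ∈ S ∧ W.length = n}.ncard : ℤ)

theorem finite_length (S : Set (List (Option Bool))) (n : ℕ) :
    {W | W ∈ S ∧ W.length = n}.Finite :=
  (List.finite_length_eq (Option Bool) n).subset fun _ h => h.2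

theorem coeff_gf (S : Set (List (Option Bool))) (n : ℕ) :
    coeff n (gf S) = ({W | W ∈ S ∧ W.length = n}.ncard : ℤ) := by
  simp [gf]

theorem gf_union {S T : Set (List (Option Bool))} (h : Disjoint S T) :
    gf (S ∪ T) = gf S + gf T := by
  ext n
  rw [map_add, coeff_gf, coeff_gf, coeff_gf, ← Nat.cast_add, ← Set.ncard_union_eq
    (h.mono (fun _ h => h.1) (fun _ h => h.1)) (finite_length _ _) (finite_length _ _)]
  congr 2
  ext W
  simp [or_and_right]

theorem gf_empty : gf ∅ = 0 := by
  ext n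
  simp [coeff_gf]

theorem gf_nil : gf {[]} = 1 := by
  ext n
  rw [coeff_gf, coeff_one]
  split_ifs with h
  · subst h
    have : {W : List (Option Bool) | W ∈ ({[]} : Set _) ∧ W.length = 0} = {[]} := by
      ext W; simp
    rw [this]; simp
  · have : {W : List (Option Bool) | W ∈ ({[]} : Set _) ∧ W.length = n} = ∅ := by
      ext W
      simp only [Set.mem_singleton_iff, Set.mem_ofPred_eq, Set.mem_empty_iff_false, iff_false]
      rintro ⟨rfl, h'⟩
      exact h h'.symm
    rw [this]; simp

theorem gf_image_succ {S : Set (List (Option Bool))} {f : List (Option Bool) → List (Option Bool)}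
    (hf : Function.Injective f) (hl : ∀ W, (f W).length = W.length + 1) :
    gf (f '' S) = X * gf S := by
  ext n
  rcases n with _ | n
  · rw [coeff_zero_X_mul, coeff_gf]
    have : {W | W ∈ f '' S ∧ W.length = 0} = ∅ := by
      ext W
      simp only [Set.mem_image, Set.mem_ofPred_eq, Set.mem_empty_iff_false, iff_false]
      rintro ⟨⟨V, -, rfl⟩, h⟩
      rw [hl] at h
      omega
    rw [this]; simp
  · rw [coeff_succ_X_mul, coeff_gf S, ← Set.ncard_image_of_injective _ hf,
      coeff_gf]
    congr 2
    ext W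
    simp only [Set.mem_image, Set.mem_ofPred_eq]
    constructor
    · rintro ⟨⟨V, hV, rfl⟩, h⟩
      rw [hl] at h
      exact ⟨V, ⟨hV, by omega⟩, rfl⟩
    · rintro ⟨V, ⟨hV, h⟩, rfl⟩
      exact ⟨⟨V, hV, rfl⟩, by rw [hl, h]⟩

theorem gf_cons (a : Option Bool) (S : Set (List (Option Bool))) :
    gf (List.cons a '' S) = X * gf S :=
  gf_image_succ List.cons_injective (by simp)

theorem gf_snoc (a : Option Bool) (S : Set (List (Option Bool))) :
    gf ((fun W => W ++ [a]) '' S) = X * gf S :=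
  gf_image_succ (fun _ _ h => List.append_cancel_right h) (by simp)

/-- Splitting a language by the first letter of its words. -/
theorem gf_eq_cons (S : Set (List (Option Bool))) :
    gf S = gf (S ∩ {[]}) + X * (gf {W | none :: W ∈ S} + gf {W | some true :: W ∈ S} +
      gf {W | some false :: W ∈ S}) := by
  rw [mul_add, mul_add, ← gf_cons none, ← gf_cons (some true), ← gf_cons (some false),
    ← gf_union, ← gf_union, ← gf_union]
  · congr 1
    ext W
    rcases W with _ | ⟨_ | _ | _, W⟩ <;> simp
  all_goals
    rw [Set.disjoint_left]
    intro W
    rcases W with _ | ⟨_ | _ | _, W⟩ <;> simp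

/-- Splitting a language by the last letter of its words. -/
theorem gf_eq_snoc (S : Set (List (Option Bool))) :
    gf S = gf (S ∩ {[]}) + X * (gf {W | W ++ [none] ∈ S} + gf {W | W ++ [some true] ∈ S} +
      gf {W | W ++ [some false] ∈ S}) := by
  rw [mul_add, mul_add, ← gf_snoc none, ← gf_snoc (some true), ← gf_snoc (some false),
    ← gf_union, ← gf_union, ← gf_union]
  · congr 1
    ext W
    rcases List.eq_nil_or_concat W with rfl | ⟨W, a, rfl⟩
    · simp
    · rcases a with _ | _ | _ <;> simp
  all_goals
    rw [Set.disjoint_left]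
    intro W
    rcases List.eq_nil_or_concat W with rfl | ⟨W, a, rfl⟩
    · simp
    · rcases a with _ | _ | _ <;> simp

/-- Pairs of words counted by total length. -/
theorem ncard_pairs (S T : Set (List (Option Bool))) (n : ℕ) :
    ({P : List (Option Bool) × List (Option Bool) | P.1 ∈ S ∧ P.2 ∈ T ∧
      P.1.length + P.2.length = n}.ncard : ℤ) = coeff n (gf S * gf T) := by
  classical
  rw [coeff_mul]
  simp only [coeff_gf]
  have h : {P : List (Option Bool) × List (Option Bool) | P.1 ∈ S ∧ P.2 ∈ T ∧
      P.1.length + P.2.length = n} = ((Finset.HasAntidiagonal.antidiagonal n).biUnion fun ij =>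
        (finite_length S ij.1).toFinset ×ˢ (finite_length T ij.2).toFinset : Finset _) := by
    ext P
    simp only [Set.mem_ofPred_eq, Finset.coe_biUnion, Finset.mem_coe,
      Finset.HasAntidiagonal.mem_antidiagonal,
      Set.mem_iUnion, Finset.mem_product, Set.Finite.mem_toFinset, exists_prop, Prod.exists]
    constructor
    · rintro ⟨h1, h2, h3⟩
      exact ⟨_, _, h3, ⟨h1, rfl⟩, h2, rfl⟩
    · rintro ⟨i, j, h3, ⟨h1, rfl⟩, h2, rfl⟩
      exact ⟨h1, h2, h3⟩
  rw [h, Set.ncard_coe_finset, Finset.card_biUnion]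
  · push_cast
    refine Finset.sum_congr rfl fun ij _ => ?_
    rw [Finset.card_product, Set.ncard_eq_toFinset_card _ (finite_length S ij.1),
      Set.ncard_eq_toFinset_card _ (finite_length T ij.2)]
    push_cast
    rfl
  · rintro ⟨i, j⟩ - ⟨i', j'⟩ - hne
    rw [Function.onFun, Finset.disjoint_left]
    rintro P hP hP'
    simp only [Finset.mem_product, Set.Finite.mem_toFinset, Set.mem_ofPred_eq] at hP hP'
    apply hne
    rw [← hP.1.2, ← hP.2.2, ← hP'.1.2, ← hP'.2.2]

/-- Unambiguous concatenation with a separating letter. -/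
theorem gf_concat {S T : Set (List (Option Bool))} (a : Option Bool)
    (hinj : ∀ s ∈ S, ∀ s' ∈ S, ∀ t ∈ T, ∀ t' ∈ T, s ++ a :: t = s' ++ a :: t' → s = s') :
    gf {W | ∃ s ∈ S, ∃ t ∈ T, W = s ++ a :: t} = X * (gf S * gf T) := by
  rw [← mul_assoc, ← gf_snoc a]
  ext n
  rw [← ncard_pairs, coeff_gf]
  have : {W | W ∈ {W | ∃ s ∈ S, ∃ t ∈ T, W = s ++ a :: t} ∧ W.length = n} =
      (fun P : List (Option Bool) × List (Option Bool) => P.1 ++ P.2) ''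
        {P | P.1 ∈ (fun W => W ++ [a]) '' S ∧ P.2 ∈ T ∧ P.1.length + P.2.length = n} := by
    ext W
    simp only [Set.mem_ofPred_eq, Set.mem_image, Prod.exists]
    constructor
    · rintro ⟨⟨s, hs, t, ht, rfl⟩, hl⟩
      exact ⟨s ++ [a], t, ⟨⟨s, hs, rfl⟩, ht, by simp at hl ⊢; omega⟩, by simp⟩
    · rintro ⟨_, t, ⟨⟨s, hs, rfl⟩, ht, hl⟩, rfl⟩
      exact ⟨⟨s, hs, t, ht, by simp⟩, by simp at hl ⊢; omega⟩
  rw [this, Set.InjOn.ncard_image]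
  rintro ⟨_, t⟩ ⟨⟨s, hs, rfl⟩, ht, -⟩ ⟨_, t'⟩ ⟨⟨s', hs', rfl⟩, ht', -⟩ h
  have h' : s ++ a :: t = s' ++ a :: t' := by simpa using h
  have h2 := hinj s hs s' hs' t ht t' ht' h'
  subst h2
  simpa using h'

/-- Coefficients of the generating function of a graded disjoint union. -/
theorem coeff_gf_iUnion {S : ℕ → Set (List (Option Bool))}
    (hd : Pairwise (Function.onFun Disjoint S))
    (hlen : ∀ g, ∀ W ∈ S g, g ≤ W.length) {n K : ℕ} (hn : n < K) :
    coeff n (gf (⋃ g, S g)) = coeff n (∑ g ∈ Finset.range K, gf (S g)) := by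
  have key : ∀ K, gf (⋃ g ∈ Finset.range K, S g) = ∑ g ∈ Finset.range K, gf (S g) := by
    intro K
    induction K with
    | zero => simp [gf_empty]
    | succ K ih =>
      rw [Finset.sum_range_succ, ← ih, ← gf_union]
      · congr 1
        ext W
        simp only [Finset.mem_range, Set.mem_iUnion, Set.mem_union, exists_prop,
          Nat.lt_succ_iff_lt_or_eq]
        constructor
        · rintro ⟨g, h | rfl, hg⟩
          · exact Or.inl ⟨g, h, hg⟩
          · exact Or.inr hg
        · rintro (⟨g, h, hg⟩ | hg)
          · exact ⟨g, Or.inl h, hg⟩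
          · exact ⟨K, Or.inr rfl, hg⟩
      · rw [Set.disjoint_left]
        intro W hW hW'
        simp only [Finset.mem_range, Set.mem_iUnion, exists_prop] at hW
        obtain ⟨g, hg, hW⟩ := hW
        exact Set.disjoint_left.1 (hd (ne_of_lt hg)) hW hW'
  rw [← key, coeff_gf, coeff_gf]
  congr 2
  ext W
  simp only [Set.mem_iUnion, Set.mem_ofPred_eq, Finset.mem_range, exists_prop]
  constructor
  · rintro ⟨⟨g, hg⟩, rfl⟩
    exact ⟨⟨g, (hlen g W hg).trans_lt hn, hg⟩, rfl⟩
  · rintro ⟨⟨g, -, hg⟩, rfl⟩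
    exact ⟨⟨g, hg⟩, rfl⟩

/-- A system of power series with a one-step recursion has at most one solution. -/
theorem eq_of_step_recursion {f a b : ℕ → PowerSeries ℤ}
    (ha0 : a 0 = f 0 + X * (a 0 + a 1))
    (ha : ∀ h, a (h + 1) = f (h + 1) + X * (a (h + 1) + a (h + 2) + a h))
    (hb0 : b 0 = f 0 + X * (b 0 + b 1))
    (hb : ∀ h, b (h + 1) = f (h + 1) + X * (b (h + 1) + b (h + 2) + b h)) (h : ℕ) :
    a h = b h := by
  ext n
  induction n generalizing h with
  | zero =>
    rcases h with _ | h
    · rw [ha0, hb0]; simp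
    · rw [ha, hb]; simp
  | succ n ih =>
    rcases h with _ | h
    · rw [ha0, hb0]; simp [coeff_succ_X_mul, ih]
    · rw [ha, hb]; simp [coeff_succ_X_mul, ih]

/-- The walks from height `h` to height `k`. -/
def walks (h k : ℕ) : Set (List (Option Bool)) := {W | Walk h W k}

theorem gf_walks_zero_zero :
    gf (walks 0 0) = 1 + X * (gf (walks 0 0) + gf (walks 1 0)) := by
  conv_lhs => rw [gf_eq_cons]
  have : walks 0 0 ∩ {[]} = {[]} := by ext W; simp +contextual [walks, Walk]
  rw [this, gf_nil]
  simp [walks, Walk, gf_empty]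

theorem gf_walks_succ_zero (h : ℕ) :
    gf (walks (h + 1) 0) =
      0 + X * (gf (walks (h + 1) 0) + gf (walks (h + 2) 0) + gf (walks h 0)) := by
  conv_lhs => rw [gf_eq_cons]
  have : walks (h + 1) 0 ∩ {[]} = ∅ := by
    ext W
    simp only [Set.mem_inter_iff, Set.mem_singleton_iff, Set.mem_empty_iff_false, iff_false]
    rintro ⟨h1, rfl⟩
    simp [walks, Walk] at h1
  rw [this, gf_empty]
  simp [walks, Walk]

theorem gf_walks_zero_succ (h : ℕ) :
    gf (walks 0 (h + 1)) =
      0 + X * (gf (walks 0 (h + 1)) + gf (walks 0 (h + 2)) + gf (walks 0 h)) := by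
  conv_lhs => rw [gf_eq_snoc]
  have : walks 0 (h + 1) ∩ {[]} = ∅ := by
    ext W
    simp only [Set.mem_inter_iff, Set.mem_singleton_iff, Set.mem_empty_iff_false, iff_false]
    rintro ⟨h1, rfl⟩
    simp [walks, Walk] at h1
  have h1 : {W | W ++ [none] ∈ walks 0 (h + 1)} = walks 0 (h + 1) := by
    ext W; simp [walks, walk_append, Walk]
  have h2 : {W | W ++ [some true] ∈ walks 0 (h + 1)} = walks 0 h := by
    ext W; simp [walks, walk_append, Walk]
  have h3 : {W | W ++ [some false] ∈ walks 0 (h + 1)} = walks 0 (h + 2) := by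
    ext W
    simp only [walks, walk_append, Set.mem_ofPred_eq]
    constructor
    · rintro ⟨_ | j, hj, hj'⟩
      · exact hj'.elim
      · have : j = h + 1 := hj'
        rwa [this] at hj
    · intro hW
      exact ⟨h + 2, hW, rfl⟩
  rw [this, gf_empty, h1, h2, h3]
  ring

theorem gf_walks_zero_zero_snoc :
    gf (walks 0 0) = 1 + X * (gf (walks 0 0) + gf (walks 0 1)) := by
  conv_lhs => rw [gf_eq_snoc]
  have : walks 0 0 ∩ {[]} = {[]} := by ext W; simp +contextual [walks, Walk]
  have h1 : {W | W ++ [none] ∈ walks 0 0} = walks 0 0 := by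
    ext W; simp [walks, walk_append, Walk]
  have h2 : {W | W ++ [some true] ∈ walks 0 0} = ∅ := by
    ext W; simp [walks, walk_append, Walk]
  have h3 : {W | W ++ [some false] ∈ walks 0 0} = walks 0 1 := by
    ext W
    simp only [walks, walk_append, Set.mem_ofPred_eq]
    constructor
    · rintro ⟨_ | j, hj, hj'⟩
      · exact hj'.elim
      · have : j = 0 := hj'
        rwa [this] at hj
    · intro hW
      exact ⟨1, hW, rfl⟩
  rw [this, gf_nil, h1, h2, h3, gf_empty]
  ring

/-- The generating function of Motzkin paths. -/
noncomputable def motzkinSeries : PowerSeries ℤ := gf (walks 0 0)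

/-- The generating function of nonempty Motzkin paths obtained by adding one final step to
Motzkin paths. -/
noncomputable def motzkinShift : PowerSeries ℤ := X * motzkinSeries

theorem gf_walks_succ_zero_eq_mul (h : ℕ) :
    gf (walks (h + 1) 0) = motzkinShift * gf (walks h 0) := by
  refine eq_of_step_recursion (f := fun h => if h = 0 then motzkinShift else 0)
    (a := fun h => gf (walks (h + 1) 0)) (b := fun h => motzkinShift * gf (walks h 0))
    ?_ ?_ ?_ ?_ h
  · simp only [if_true]
    conv_lhs => rw [gf_walks_succ_zero]
    rw [motzkinShift, motzkinSeries]
    ring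
  · intro h
    simp only [Nat.add_eq_zero_iff, one_ne_zero, and_false, if_false]
    exact gf_walks_succ_zero _
  · simp only [if_true]
    conv_lhs => rw [gf_walks_zero_zero]
    ring
  · intro h
    simp only [Nat.add_eq_zero_iff, one_ne_zero, and_false, if_false]
    conv_lhs => rw [gf_walks_succ_zero]
    ring

theorem gf_walks_zero_right (h : ℕ) :
    gf (walks h 0) = motzkinSeries * motzkinShift ^ h := by
  induction h with
  | zero => simp [motzkinSeries]
  | succ h ih => rw [gf_walks_succ_zero_eq_mul, ih]; ring

theorem gf_walks_zero_left (h : ℕ) :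
    gf (walks 0 h) = motzkinSeries * motzkinShift ^ h := by
  rw [← gf_walks_zero_right]
  refine eq_of_step_recursion (f := fun h => if h = 0 then 1 else 0)
    (a := fun h => gf (walks 0 h)) (b := fun h => gf (walks h 0)) ?_ ?_ ?_ ?_ h
  · simpa using gf_walks_zero_zero_snoc
  · simpa using gf_walks_zero_succ
  · simpa using gf_walks_zero_zero
  · simpa using gf_walks_succ_zero

theorem motzkinSeries_eq :
    motzkinSeries = 1 + X * motzkinSeries + X * motzkinShift * motzkinSeries := by
  have := gf_walks_zero_zero
  rw [gf_walks_zero_right, gf_walks_zero_right] at this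
  linear_combination this

theorem motzkinShift_eq : motzkinShift = X * (1 + motzkinShift + motzkinShift ^ 2) := by
  have := motzkinSeries_eq
  rw [motzkinShift] at *
  linear_combination X * this

theorem deriv_motzkinShift_mul :
    derivative ℤ motzkinShift * (1 - motzkinShift ^ 2) = motzkinSeries ^ 2 := by
  have h1 := congrArg (derivative ℤ) motzkinShift_eq
  simp only [Derivation.leibniz, map_add, Derivation.leibniz_pow, derivative_X,
    smul_eq_mul, nsmul_eq_mul, Nat.add_one_sub_one, pow_one,
    Nat.cast_ofNat, mul_one, Derivation.map_one_eq_zero] at h1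
  have h2 := motzkinSeries_eq
  have h3 : motzkinSeries = 1 + motzkinShift + motzkinShift ^ 2 := by
    rw [motzkinShift] at *
    linear_combination h2
  have h4 : motzkinShift = X * motzkinSeries := rfl
  linear_combination motzkinSeries * h1 - derivative ℤ motzkinShift * h2 -
    derivative ℤ motzkinShift * motzkinShift * h4 - motzkinSeries * h3

theorem coeff_deriv_motzkinShift (i : ℕ) :
    coeff i (derivative ℤ motzkinShift) = (i + 1) * (motzkin i : ℤ) := by
  rw [coeff_derivative, motzkinShift, coeff_succ_X_mul, motzkinSeries, coeff_gf, motzkin]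
  have : {W | W ∈ walks 0 0 ∧ W.length = i} = {w | w.length = i ∧ IsMotzkinWord w} := by
    ext W
    simp [walks, isMotzkinWord_iff_walk, and_comm]
  rw [this]
  ring

/-- A list is empty or its last entry is `a`. -/
def EndsIn {α : Type*} (a : α) (A : List α) : Prop := A = [] ∨ ∃ A', A = A' ++ [a]

theorem EndsIn.eq_of_append_eq {α : Type*} [BEq α] [LawfulBEq α] {a : α} {A B C D : List α}
    (hA : EndsIn a A) (hB : EndsIn a B) (h : A ++ C = B ++ D) (hc : A.count a = B.count a) :
    A = B := by
  have key : ∀ {A E : List α}, EndsIn a (A ++ E) → A.count a = (A ++ E).count a → E = [] := by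
    intro A E hE hc
    rcases List.eq_nil_or_concat E with rfl | ⟨E', b, rfl⟩
    · rfl
    · exfalso
      rcases hE with hE | ⟨A', hE⟩
      · simp at hE
      · rw [List.concat_eq_append, ← List.append_assoc] at hE
        have := (List.append_inj' hE rfl).2
        simp only [List.cons.injEq, and_true] at this
        subst this
        simp at hc
  rcases List.prefix_or_prefix_of_prefix (⟨C, rfl⟩ : A <+: A ++ C) (⟨D, h.symm⟩ : B <+: A ++ C) with
    ⟨E, rfl⟩ | ⟨E, rfl⟩
  · simp [key hB hc]
  · simp [key hA hc.symm]

/-- Indicator list of the down steps. -/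
def downFlags (W : List (Option Bool)) : List Bool := W.map (· == some false)

/-- Indicator list of the up steps. -/
def upFlags (W : List (Option Bool)) : List Bool := W.map (· == some true)

/-- Walks from height `h` to `0` whose first down step, where a virtual down step is added at the
end, comes right after the first `k` steps. -/
def firstDownWalks (k h : ℕ) : Set (List (Option Bool)) :=
  {W | Walk h W 0 ∧ ∃ a, downFlags W ++ [true] = List.replicate k false ++ true :: a}

theorem gf_firstDownWalks (k h : ℕ) :
    gf (firstDownWalks k h) = X ^ k * (1 + motzkinShift) ^ k * motzkinShift ^ h := by
  induction k generalizing h with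
  | zero =>
    rw [gf_eq_cons]
    have h1 : {W | none :: W ∈ firstDownWalks 0 h} = ∅ := by
      ext W; simp [firstDownWalks, downFlags]
    have h2 : {W | some true :: W ∈ firstDownWalks 0 h} = ∅ := by
      ext W; simp [firstDownWalks, downFlags]
    rw [h1, h2, gf_empty]
    rcases h with _ | h
    · have h3 : {W | some false :: W ∈ firstDownWalks 0 0} = ∅ := by
        ext W; simp [firstDownWalks, downFlags, Walk]
      have h4 : firstDownWalks 0 0 ∩ {[]} = {[]} := by
        ext W; simp +contextual [firstDownWalks, downFlags, Walk]
      rw [h3, h4, gf_empty, gf_nil]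
      simp
    · have h3 : {W | some false :: W ∈ firstDownWalks 0 (h + 1)} = walks h 0 := by
        ext W; simp [firstDownWalks, downFlags, Walk, walks]
      have h4 : firstDownWalks 0 (h + 1) ∩ {[]} = ∅ := by
        ext W
        simp only [Set.mem_inter_iff, Set.mem_singleton_iff, Set.mem_empty_iff_false, iff_false]
        rintro ⟨h1, rfl⟩
        simp [firstDownWalks, Walk] at h1
      rw [h3, h4, gf_empty, gf_walks_zero_right, pow_succ' motzkinShift]
      simp only [pow_zero, one_mul, zero_add]
      exact (mul_assoc _ _ _).symm
  | succ k ih =>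
    rw [gf_eq_cons]
    have h1 : {W | none :: W ∈ firstDownWalks (k + 1) h} = firstDownWalks k h := by
      ext W; simp [firstDownWalks, downFlags, Walk, List.replicate_succ]
    have h2 : {W | some true :: W ∈ firstDownWalks (k + 1) h} = firstDownWalks k (h + 1) := by
      ext W; simp [firstDownWalks, downFlags, Walk, List.replicate_succ]
    have h3 : {W | some false :: W ∈ firstDownWalks (k + 1) h} = ∅ := by
      ext W; simp [firstDownWalks, downFlags, List.replicate_succ]
    have h4 : firstDownWalks (k + 1) h ∩ {[]} = ∅ := by
      ext W
      simp only [Set.mem_inter_iff, Set.mem_singleton_iff, Set.mem_empty_iff_false, iff_false]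
      rintro ⟨h1, rfl⟩
      simp [firstDownWalks, downFlags, List.replicate_succ] at h1
    rw [h1, h2, h3, h4, gf_empty, ih, ih]
    ring

theorem downFlags_first_iff (W : List (Option Bool)) (k : ℕ) :
    (∃ a, downFlags W ++ [true] = List.replicate k false ++ true :: a) ↔
      (W.getD k none = some false ∨ W.length = k) ∧ ∀ i < k, W.getD i none ≠ some false := by
  induction W generalizing k with
  | nil => rcases k with _ | k <;> simp [downFlags, List.replicate_succ]
  | cons b W ih =>
    rcases k with _ | k
    · rcases b with _ | _ | _ <;> simp [downFlags]
    · have := ih k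
      simp only [downFlags] at this
      rw [Nat.forall_lt_succ_left]
      rcases b with _ | _ | _ <;> simp [downFlags, List.replicate_succ] at * <;> assumption

theorem motzkinBallot_eq_coeff (k j : ℕ) :
    (motzkinBallot j (k + 1) : ℤ) = coeff j (gf (firstDownWalks k 0)) := by
  rw [coeff_gf, motzkinBallot]
  split_ifs with h
  · obtain rfl : j = k := by omega
    have : {W | W ∈ firstDownWalks j 0 ∧ W.length = j} = {List.replicate j none} := by
      ext W
      simp only [firstDownWalks, downFlags_first_iff, Set.mem_ofPred_eq, Set.mem_singleton_iff]
      constructor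
      · rintro ⟨⟨h1, -, h2⟩, rfl⟩
        have h3 : W.count (some false) = 0 := by
          rw [List.count_eq_zero]
          intro hm
          obtain ⟨i, hi, he⟩ := List.getElem_of_mem hm
          exact h2 i hi (by rw [List.getD_eq_getElem _ _ hi, he])
        have h4 : W.count (some true) = 0 := by
          have := h1.count_eq
          omega
        rw [List.count_eq_zero] at h3 h4
        refine List.eq_replicate_iff.2 ⟨rfl, fun b hb => ?_⟩
        rcases b with _ | _ | _
        · rfl
        · exact (h3 hb).elim
        · exact (h4 hb).elim
      · rintro rfl
        refine ⟨⟨?_, by simp, fun i hi => ?_⟩, by simp⟩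
        · apply walk_of_count_le <;> simp [List.count_replicate]
        · rw [List.getD_eq_getElem _ _ (by simpa using hi)]
          simp
    rw [this]
    simp
  · congr 2
    ext W
    simp only [firstDownWalks, downFlags_first_iff, Set.mem_ofPred_eq, isMotzkinWord_iff_walk,
      Nat.add_sub_cancel]
    constructor
    · rintro ⟨h1, h2, h3, h4⟩
      exact ⟨⟨h2, Or.inl h3, h4⟩, h1⟩
    · rintro ⟨⟨h2, h3, h4⟩, h1⟩
      refine ⟨h1, h2, h3.resolve_right fun h5 => ?_, h4⟩
      omega

/-- Walks from `0` to `g` that are empty or end in an up step. -/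
def upEndingWalks (g : ℕ) : Set (List (Option Bool)) :=
  {V | Walk 0 V g ∧ EndsIn (some true) V}

theorem gf_upEndingWalks (g : ℕ) : gf (upEndingWalks g) = motzkinShift ^ g := by
  rcases g with _ | g
  · have : upEndingWalks 0 = {[]} := by
      ext V
      simp only [upEndingWalks, EndsIn, Set.mem_ofPred_eq, Set.mem_singleton_iff]
      constructor
      · rintro ⟨h, rfl | ⟨V, rfl⟩⟩
        · rfl
        · simp [walk_append, Walk] at h
      · rintro rfl
        simp [Walk]
    rw [this, gf_nil, pow_zero]
  · have : upEndingWalks (g + 1) = (fun W => W ++ [some true]) '' walks 0 g := by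
      ext V
      simp only [upEndingWalks, EndsIn, Set.mem_ofPred_eq, Set.mem_image]
      constructor
      · rintro ⟨h, rfl | ⟨V, rfl⟩⟩
        · simp [Walk] at h
        · exact ⟨V, by simpa [walk_append, Walk, walks] using h, rfl⟩
      · rintro ⟨V, h, rfl⟩
        exact ⟨by simpa [walk_append, Walk, walks] using h, Or.inr ⟨V, rfl⟩⟩
    rw [this, gf_snoc, gf_walks_zero_left, pow_succ']
    nth_rewrite 2 [motzkinShift]
    ring

/-- Arbitrary words with `g` down steps and `q` up steps. -/
def countWords (g q : ℕ) : Set (List (Option Bool)) :=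
  {W | W.count (some false) = g ∧ W.count (some true) = q}

theorem gf_countWords_zero_zero :
    gf (countWords 0 0) = 1 + X * gf (countWords 0 0) := by
  conv_lhs => rw [gf_eq_cons]
  have h4 : countWords 0 0 ∩ {[]} = {[]} := by
    ext W; simp +contextual [countWords]
  rw [h4, gf_nil]
  simp [countWords, gf_empty]

theorem countWords_inter_nil {g q : ℕ} (h : g + q ≠ 0) : countWords g q ∩ {[]} = ∅ := by
  ext W
  simp only [Set.mem_inter_iff, Set.mem_singleton_iff, Set.mem_empty_iff_false, iff_false]
  rintro ⟨⟨h1, h2⟩, rfl⟩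
  simp at h1 h2
  omega

theorem gf_countWords_succ_zero (g : ℕ) :
    gf (countWords (g + 1) 0) = X * (gf (countWords (g + 1) 0) + gf (countWords g 0)) := by
  conv_lhs => rw [gf_eq_cons]
  rw [countWords_inter_nil (by omega)]
  simp [countWords, gf_empty]

theorem gf_countWords_zero_succ (q : ℕ) :
    gf (countWords 0 (q + 1)) = X * (gf (countWords 0 (q + 1)) + gf (countWords 0 q)) := by
  conv_lhs => rw [gf_eq_cons]
  rw [countWords_inter_nil (by omega)]
  simp [countWords, gf_empty]

theorem gf_countWords_succ_succ (g q : ℕ) :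
    gf (countWords (g + 1) (q + 1)) = X * (gf (countWords (g + 1) (q + 1)) +
      gf (countWords g (q + 1)) + gf (countWords (g + 1) q)) := by
  conv_lhs => rw [gf_eq_cons]
  rw [countWords_inter_nil (by omega)]
  simp [countWords, gf_empty]
  ring

theorem X_pow_dvd_sum_sub {w : ℕ → ℕ → PowerSeries ℤ} (h00 : w 0 0 = 1 + X * w 0 0)
    (hs0 : ∀ g, w (g + 1) 0 = X * (w (g + 1) 0 + w g 0))
    (h0s : ∀ q, w 0 (q + 1) = X * (w 0 (q + 1) + w 0 q))
    (hss : ∀ g q, w (g + 1) (q + 1) = X * (w (g + 1) (q + 1) + w g (q + 1) + w (g + 1) q))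
    (K q : ℕ) :
    X ^ K ∣ ∑ g ∈ Finset.range K, motzkinShift ^ g * w g q - motzkinSeries * motzkinShift ^ q := by
  have hunit : IsUnit (1 - X : PowerSeries ℤ) := by
    rw [PowerSeries.isUnit_iff_constantCoeff]; simp
  have hm := motzkinSeries_eq
  induction K generalizing q with
  | zero => simp
  | succ K ihK =>
    induction q with
    | zero =>
      obtain ⟨c, hc⟩ := ihK 0
      rw [← hunit.dvd_mul_left]
      refine ⟨motzkinShift * c, ?_⟩
      have hrec : ∑ g ∈ Finset.range K, motzkinShift ^ (g + 1) * w (g + 1) 0 =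
          X * (∑ g ∈ Finset.range K, motzkinShift ^ (g + 1) * w (g + 1) 0 +
            motzkinShift * ∑ g ∈ Finset.range K, motzkinShift ^ g * w g 0) := by
        rw [Finset.mul_sum, ← Finset.sum_add_distrib, Finset.mul_sum]
        refine Finset.sum_congr rfl fun g _ => ?_
        linear_combination motzkinShift ^ (g + 1) * hs0 g
      rw [Finset.sum_range_succ']
      linear_combination hrec + h00 - hm + X * motzkinShift * hc
    | succ q ihq =>
      obtain ⟨c, hc⟩ := ihK (q + 1)
      obtain ⟨d, hd⟩ := ihq
      rw [← hunit.dvd_mul_left]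
      refine ⟨motzkinShift * c + X * d, ?_⟩
      have hrec : ∑ g ∈ Finset.range K, motzkinShift ^ (g + 1) * w (g + 1) (q + 1) =
          X * (∑ g ∈ Finset.range K, motzkinShift ^ (g + 1) * w (g + 1) (q + 1) +
            motzkinShift * ∑ g ∈ Finset.range K, motzkinShift ^ g * w g (q + 1) +
            ∑ g ∈ Finset.range K, motzkinShift ^ (g + 1) * w (g + 1) q) := by
        rw [Finset.mul_sum, ← Finset.sum_add_distrib, ← Finset.sum_add_distrib, Finset.mul_sum]
        refine Finset.sum_congr rfl fun g _ => ?_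
        linear_combination motzkinShift ^ (g + 1) * hss g q
      rw [Finset.sum_range_succ'] at hd ⊢
      have hm' : motzkinShift = X * motzkinSeries := rfl
      linear_combination hrec + h0s q - motzkinShift ^ (q + 1) * hm + X * motzkinShift * hc + X * hd
        - motzkinShift ^ q * hm'

/-- Words `V u W` where `V` is a walk from `0` to some height `g` that is empty or ends in an up
step, and `W` has `g` down steps and `q` up steps. -/
def leftWords (q : ℕ) : Set (List (Option Bool)) :=
  ⋃ g, {Y | ∃ V ∈ upEndingWalks g, ∃ W ∈ countWords g q, Y = V ++ some true :: W}

/-- Words `W d U` where `W` has `q` down steps and some number `h` of up steps, and `U` is a walk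
from `h` to `0` whose first down step follows the first `k` steps. -/
def rightWords (k q : ℕ) : Set (List (Option Bool)) :=
  ⋃ h, {Z | ∃ W ∈ countWords q h, ∃ U ∈ firstDownWalks k h, Z = W ++ some false :: U}

theorem upEnding_unique {q g g' : ℕ} {V V' W W' : List (Option Bool)} (hV : V ∈ upEndingWalks g)
    (hV' : V' ∈ upEndingWalks g') (hW : W ∈ countWords g q) (hW' : W' ∈ countWords g' q)
    (h : V ++ some true :: W = V' ++ some true :: W') : V = V' := by
  refine EndsIn.eq_of_append_eq hV.2 hV'.2 h ?_
  have := congrArg (List.count (some true)) h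
  simp only [List.count_append, List.count_cons_self, hW.2, hW'.2] at this
  omega

theorem coeff_gf_leftWords (q : ℕ) {n K : ℕ} (hn : n < K) :
    coeff n (gf (leftWords q)) = coeff n (X * (motzkinSeries * motzkinShift ^ q)) := by
  rw [leftWords, coeff_gf_iUnion _ _ hn]
  · have h1 : ∀ g, gf {Y | ∃ V ∈ upEndingWalks g, ∃ W ∈ countWords g q, Y = V ++ some true :: W} =
        X * (motzkinShift ^ g * gf (countWords g q)) := by
      intro g
      rw [gf_concat, gf_upEndingWalks]
      intro s hs s' hs' t ht t' ht' h
      exact upEnding_unique hs hs' ht ht' h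
    simp only [h1, ← Finset.mul_sum]
    have h2 := X_pow_dvd_sum_sub (w := fun g q => gf (countWords g q)) gf_countWords_zero_zero
      gf_countWords_succ_zero
      gf_countWords_zero_succ gf_countWords_succ_succ K q
    have h3 := X_pow_dvd_iff.1 (h2.mul_left X) n hn
    rwa [mul_sub, map_sub, sub_eq_zero] at h3
  · intro g g' hne
    rw [Function.onFun, Set.disjoint_left]
    rintro _ ⟨V, hV, W, hW, rfl⟩ ⟨V', hV', W', hW', h⟩
    have h2 := upEnding_unique hV hV' hW hW' h
    subst h2
    have h3 := hV.1.count_eq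
    have h4 := hV'.1.count_eq
    omega
  · rintro g _ ⟨V, hV, W, hW, rfl⟩
    have h3 := hV.1.count_eq
    have h4 := List.count_le_length (l := V) (a := some true)
    simp
    omega

theorem beforeDown_unique {q h h' : ℕ} {V V' W W' : List (Option Bool)} (hV : V ∈ countWords q h)
    (hV' : V' ∈ countWords q h') (hE : V ++ some false :: W = V' ++ some false :: W') : V = V' := by
  have : V ++ [some false] = V' ++ [some false] := by
    refine EndsIn.eq_of_append_eq (a := some false) (C := W) (D := W')
      (Or.inr ⟨_, rfl⟩) (Or.inr ⟨_, rfl⟩) (by simpa using hE) ?_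
    simp [hV.1, hV'.1]
  exact List.append_cancel_right this

theorem coeff_gf_rightWords (k q : ℕ) {n K : ℕ} (hn : n < K) :
    coeff n (gf (rightWords k q)) =
      coeff n (X * (motzkinSeries * motzkinShift ^ q) * gf (firstDownWalks k 0)) := by
  rw [rightWords, coeff_gf_iUnion _ _ hn]
  · have h1 : ∀ h, gf {Z | ∃ W ∈ countWords q h, ∃ U ∈ firstDownWalks k h,
          Z = W ++ some false :: U} =
        X * gf (firstDownWalks k 0) * (motzkinShift ^ h * gf (countWords q h)) := by
      intro h
      rw [gf_concat, gf_firstDownWalks, gf_firstDownWalks]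
      · ring
      · intro s hs s' hs' t ht t' ht' h
        exact beforeDown_unique hs hs' h
    simp only [h1, ← Finset.mul_sum]
    have h2 := X_pow_dvd_sum_sub (w := fun g q => gf (countWords q g)) gf_countWords_zero_zero
      gf_countWords_zero_succ gf_countWords_succ_zero
      (fun g q => (gf_countWords_succ_succ q g).trans (by ring)) K q
    have h3 := X_pow_dvd_iff.1 (h2.mul_left (X * gf (firstDownWalks k 0))) n hn
    rw [mul_sub, map_sub, sub_eq_zero] at h3
    rw [h3]
    congr 1
    ring
  · intro g g' hne
    rw [Function.onFun, Set.disjoint_left]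
    rintro _ ⟨V, hV, W, hW, rfl⟩ ⟨V', hV', W', hW', h⟩
    have h2 := beforeDown_unique hV hV' h
    subst h2
    exact hne (hV.2.symm.trans hV'.2)
  · rintro g _ ⟨V, hV, W, hW, rfl⟩
    have h4 := List.count_le_length (l := V) (a := some true)
    rw [hV.2] at h4
    simp
    omega

theorem gf_leftWords (q : ℕ) : gf (leftWords q) = X * (motzkinSeries * motzkinShift ^ q) := by
  ext n
  exact coeff_gf_leftWords q (Nat.lt_succ_self n)

theorem gf_rightWords (k q : ℕ) : gf (rightWords k q) =
    X * (motzkinSeries * motzkinShift ^ q) * gf (firstDownWalks k 0) := by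
  ext n
  exact coeff_gf_rightWords k q (Nat.lt_succ_self n)

theorem count_of_mem_leftWords {q : ℕ} {Y : List (Option Bool)} (h : Y ∈ leftWords q) :
    Y.count (some true) = Y.count (some false) + q + 1 := by
  simp only [leftWords, Set.mem_iUnion] at h
  obtain ⟨g, V, hV, W, hW, rfl⟩ := h
  have h3 := hV.1.count_eq
  have h1 := hW.1
  have h2 := hW.2
  simp
  omega

/-- The set of pairs `(Y, Z)` of total length `N` that encode Dyck paths with a unique star. -/
def starPairs (k N : ℕ) : Set (List (Option Bool) × List (Option Bool)) :=
  {P | P.1.length + P.2.length = N ∧ ((P.1 = [] ∧ P.2 ∈ firstDownWalks k 0) ∨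
    ∃ q, P.1 ∈ leftWords q ∧ P.2 ∈ rightWords k q)}

theorem ncard_starPairs (k N : ℕ) : ((starPairs k N).ncard : ℤ) =
    coeff N (gf (firstDownWalks k 0)) +
      coeff N (X ^ 2 * (derivative ℤ motzkinShift * gf (firstDownWalks k 0))) := by
  classical
  have hfin : ∀ S T : Set (List (Option Bool)), {P : List (Option Bool) × List (Option Bool) |
      P.1 ∈ S ∧ P.2 ∈ T ∧ P.1.length + P.2.length = N}.Finite := by
    intro S T
    refine ((List.finite_length_le (Option Bool) N).prod
      (List.finite_length_le (Option Bool) N)).subset ?_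
    rintro ⟨Y, Z⟩ ⟨-, -, h⟩
    simp only [Set.mem_prod, Set.mem_ofPred_eq] at h ⊢
    omega
  have hunion : starPairs k N =
      ((hfin {[]} (firstDownWalks k 0)).toFinset ∪ (Finset.range (N + 1)).biUnion fun q =>
        (hfin (leftWords q) (rightWords k q)).toFinset : Finset _) := by
    ext ⟨Y, Z⟩
    simp only [starPairs, Set.mem_ofPred_eq, Finset.coe_union, Set.mem_union, Finset.mem_coe,
      Set.Finite.mem_toFinset, Finset.mem_biUnion, Finset.mem_range, Set.mem_singleton_iff]
    constructor
    · rintro ⟨h, ⟨h1, h2⟩ | ⟨q, h1, h2⟩⟩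
      · exact Or.inl ⟨h1, h2, h⟩
      · refine Or.inr ⟨q, ?_, h1, h2, h⟩
        have h3 := count_of_mem_leftWords h1
        have h4 := List.count_le_length (l := Y) (a := some true)
        omega
    · rintro (⟨h1, h2, h⟩ | ⟨q, -, h1, h2, h⟩)
      · exact ⟨h, Or.inl ⟨h1, h2⟩⟩
      · exact ⟨h, Or.inr ⟨q, h1, h2⟩⟩
  rw [hunion, Set.ncard_coe_finset, Finset.card_union_of_disjoint, Finset.card_biUnion]
  · push_cast
    simp only [← Set.ncard_eq_toFinset_card, ncard_pairs, gf_nil, one_mul, gf_leftWords,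
      gf_rightWords]
    rw [← map_sum, add_right_inj]
    have hy : X ∣ motzkinShift := ⟨_, rfl⟩
    have hgeom : ∀ K, ∑ q ∈ Finset.range K, motzkinShift ^ (2 * q) * (1 - motzkinShift ^ 2) =
        1 - motzkinShift ^ (2 * K) := by
      intro K
      induction K with
      | zero => simp
      | succ K ih => rw [Finset.sum_range_succ, ih]; ring
    have hunit : IsUnit (1 - motzkinShift ^ 2) := by
      rw [PowerSeries.isUnit_iff_constantCoeff]
      simp [motzkinShift]
    have hdvd : X ^ (N + 1) ∣ (1 - motzkinShift ^ 2) * (∑ q ∈ Finset.range (N + 1),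
        X * (motzkinSeries * motzkinShift ^ q) *
          (X * (motzkinSeries * motzkinShift ^ q) * gf (firstDownWalks k 0)) -
        X ^ 2 * (derivative ℤ motzkinShift * gf (firstDownWalks k 0))) := by
      have h1 : (1 - motzkinShift ^ 2) * (∑ q ∈ Finset.range (N + 1),
          X * (motzkinSeries * motzkinShift ^ q) *
            (X * (motzkinSeries * motzkinShift ^ q) * gf (firstDownWalks k 0)) -
          X ^ 2 * (derivative ℤ motzkinShift * gf (firstDownWalks k 0))) =
          - (X ^ 2 * motzkinSeries ^ 2 * gf (firstDownWalks k 0)) *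
            (motzkinShift ^ (N + 1) * motzkinShift ^ (N + 1)) := by
        have h2 : ∑ q ∈ Finset.range (N + 1), X * (motzkinSeries * motzkinShift ^ q) *
            (X * (motzkinSeries * motzkinShift ^ q) * gf (firstDownWalks k 0)) =
            X ^ 2 * motzkinSeries ^ 2 * gf (firstDownWalks k 0) *
              ∑ q ∈ Finset.range (N + 1), motzkinShift ^ (2 * q) := by
          rw [Finset.mul_sum]
          refine Finset.sum_congr rfl fun q _ => ?_
          ring
        have h3 := hgeom (N + 1)
        rw [← Finset.sum_mul] at h3
        rw [h2]
        linear_combination X ^ 2 * motzkinSeries ^ 2 * gf (firstDownWalks k 0) * h3 -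
          X ^ 2 * gf (firstDownWalks k 0) * deriv_motzkinShift_mul
      rw [h1]
      exact ((pow_dvd_pow_of_dvd hy _).mul_left _).mul_left _
    rw [hunit.dvd_mul_left] at hdvd
    have h3 := X_pow_dvd_iff.1 hdvd N (Nat.lt_succ_self N)
    rwa [map_sub, sub_eq_zero] at h3
  · intro q _ q' _ hne
    rw [Function.onFun, Finset.disjoint_left]
    rintro ⟨Y, Z⟩ h h'
    rw [Set.Finite.mem_toFinset] at h h'
    have h1 := count_of_mem_leftWords h.1
    have h2 := count_of_mem_leftWords h'.1
    omega
  · rw [Finset.disjoint_left]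
    rintro ⟨Y, Z⟩ h h'
    simp only [Set.Finite.mem_toFinset, Finset.mem_biUnion, Set.mem_ofPred_eq,
      Set.mem_singleton_iff] at h h'
    obtain ⟨q, -, h1, -⟩ := h'
    have h2 := count_of_mem_leftWords h1
    rw [h.1] at h2
    simp at h2

/-- The count of star pairs in terms of Motzkin numbers and Motzkin ballot numbers. -/
theorem ncard_starPairs_eq_sum {p n : ℕ} (hp : 3 ≤ p) (hn : p ≤ n) :
    ((starPairs (p - 2) (n - 2)).ncard : ℤ) = motzkinBallotZ ((n : ℤ) - 2) (p - 1) +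
        ∑ i ∈ Finset.Icc (0 : ℤ) ((n : ℤ) - 2 - p),
          (i + 1) * motzkinZ i * motzkinBallotZ ((n : ℤ) - 4 - i) (p - 1) := by
  obtain ⟨k, rfl⟩ : ∃ k, p = k + 2 := ⟨p - 2, by omega⟩
  obtain ⟨N, rfl⟩ : ∃ N, n = N + 2 := ⟨n - 2, by omega⟩
  simp only [Nat.add_sub_cancel]
  rw [ncard_starPairs, ← motzkinBallot_eq_coeff]
  have e1 : motzkinBallotZ (((N + 2 : ℕ) : ℤ) - 2) (k + 2 - 1) = motzkinBallot N (k + 1) := by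
    rw [motzkinBallotZ, if_pos (by push_cast; omega)]
    congr 2
    push_cast
    omega
  rw [e1, add_right_inj]
  have hzero : ∀ j < k, coeff j (gf (firstDownWalks k 0)) = 0 := by
    intro j hj
    rw [gf_firstDownWalks, mul_assoc]
    exact X_pow_dvd_iff.1 (dvd_mul_right _ _) j hj
  rcases lt_or_ge N (k + 2) with hN | hN
  · rw [Finset.Icc_eq_empty (by push_cast; omega), Finset.sum_empty]
    rw [gf_firstDownWalks]
    refine X_pow_dvd_iff.1 ?_ N hN
    exact ⟨derivative ℤ motzkinShift * ((1 + motzkinShift) ^ k * motzkinShift ^ 0), by ring⟩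
  · obtain ⟨d, rfl⟩ : ∃ d, N = d + k + 2 := ⟨N - k - 2, by omega⟩
    rw [coeff_X_pow_mul, coeff_mul, Finset.Nat.sum_antidiagonal_eq_sum_range_succ_mk]
    have hI : Finset.Icc (0 : ℤ) (((d + k + 2 + 2 : ℕ) : ℤ) - 2 - (k + 2 : ℕ)) =
        (Finset.range (d + 1)).map Nat.castEmbedding := by
      ext i
      simp only [Finset.mem_Icc, Finset.mem_map, Finset.mem_range, Nat.castEmbedding_apply]
      constructor
      · rintro ⟨h1, h2⟩
        exact ⟨i.toNat, by omega, by omega⟩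
      · rintro ⟨j, hj, rfl⟩
        omega
    rw [hI, Finset.sum_map]
    symm
    refine Finset.sum_subset_zero_on_sdiff (fun i hi => ?_) (fun i hi => ?_) (fun i hi => ?_)
    · simp at hi ⊢; omega
    · rw [hzero, mul_zero]
      simp at hi
      omega
    · simp only [Finset.mem_range] at hi
      rw [coeff_deriv_motzkinShift, ← motzkinBallot_eq_coeff]
      simp only [Nat.castEmbedding_apply]
      rw [motzkinZ, if_pos (by omega), motzkinBallotZ, if_pos (by push_cast; omega)]
      congr 3
      push_cast
      omega

theorem findIdxs_getD_count (b : Bool) (x y : List Bool) (s : ℕ) :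
    ((x ++ b :: y).findIdxs (· == b) s).getD (x.count b) 0 = s + x.length := by
  induction x generalizing s with
  | nil => simp
  | cons a x ih =>
    by_cases h : a = b
    · subst h
      have := ih (s + 1)
      simp only [List.cons_append, List.findIdxs_cons, beq_self_eq_true, if_true,
        List.count_cons_self, List.getD_cons_succ, List.length_cons]
      rw [this]
      omega
    · have := ih (s + 1)
      simp only [List.cons_append, List.findIdxs_cons, beq_iff_eq, if_neg h,
        List.count_cons_of_ne h, List.length_cons]
      rw [this]
      omega

theorem exists_split_at_count {b : Bool} {w : List Bool} {j : ℕ} (hj : j < w.count b) :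
    ∃ x y, w = x ++ b :: y ∧ x.count b = j := by
  induction w generalizing j with
  | nil => simp at hj
  | cons a w ih =>
    by_cases h : a = b
    · subst h
      rcases j with _ | j
      · exact ⟨[], w, rfl, rfl⟩
      · obtain ⟨x, y, rfl, hx⟩ := ih (j := j) (by simpa using hj)
        exact ⟨a :: x, y, rfl, by simp [hx]⟩
    · obtain ⟨x, y, rfl, hx⟩ := ih (j := j) (by simpa [List.count_cons_of_ne h] using hj)
      exact ⟨a :: x, y, rfl, by simp [List.count_cons_of_ne h, hx]⟩

theorem exists_gap_split {b : Bool} {w : List Bool} {i : ℕ} (h1 : 1 ≤ i) (hi : i < w.count b) :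
    ∃ x r y, w = x ++ b :: (List.replicate r (!b) ++ b :: y) ∧ x.count b + 1 = i := by
  obtain ⟨x, z, rfl, hx⟩ := exists_split_at_count (j := i - 1) (by omega : i - 1 < w.count b)
  have hz : 0 < z.count b := by
    simp only [List.count_append, List.count_cons_self] at hi
    omega
  obtain ⟨x', y, rfl, hx'⟩ := exists_split_at_count hz
  refine ⟨x, x'.length, y, ?_, by omega⟩
  rw [List.count_eq_zero] at hx'
  have : x' = List.replicate x'.length (!b) := by
    refine List.eq_replicate_iff.2 ⟨rfl, fun c hc => ?_⟩
    cases b <;> cases c <;> simp_all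
  rw [← this]

theorem rStat_gap (x y : List Bool) (r : ℕ) :
    rStat (x ++ true :: (List.replicate r false ++ true :: y)) (x.count true + 1) = r := by
  have h1 := findIdxs_getD_count true x (List.replicate r false ++ true :: y) 0
  have h2 := findIdxs_getD_count true (x ++ true :: List.replicate r false) y 0
  have h3 : (x ++ true :: List.replicate r false).count true = x.count true + 1 := by
    simp [List.count_replicate]
  rw [h3] at h2
  simp only [List.append_assoc, List.cons_append] at h2
  rw [rStat, upIdxs, Nat.add_sub_cancel, h1, h2]
  have h4 : (x ++ true :: (List.replicate r false ++ true :: y)).take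
      (0 + (x ++ true :: List.replicate r false).length) = x ++ true :: List.replicate r false := by
    rw [zero_add, ← List.cons_append, ← List.append_assoc, List.take_left]
  rw [h4]
  have h5 : (x ++ true :: List.replicate r false).drop (0 + x.length + 1) =
      List.replicate r false := by
    have : x ++ true :: List.replicate r false = (x ++ [true]) ++ List.replicate r false := by simp
    rw [this, zero_add, List.drop_left' (by simp)]
  rw [h5]
  simp

theorem sStat_eq_rStat_map_not (w : List Bool) (i : ℕ) : sStat w i = rStat (w.map not) i := by
  have h : upIdxs (w.map not) = downIdxs w := by
    rw [upIdxs, downIdxs, List.findIdxs_map]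
    congr 1
    funext b
    cases b <;> rfl
  rw [sStat, rStat, h, ← List.map_take, ← List.map_drop]
  generalize List.drop _ _ = l
  exact (List.count_map_of_injective l not (fun a b h => by simpa using h) true).symm

theorem sStat_gap (x y : List Bool) (r : ℕ) :
    sStat (x ++ false :: (List.replicate r true ++ false :: y)) (x.count false + 1) = r := by
  rw [sStat_eq_rStat_map_not]
  have h := rStat_gap (x.map not) (y.map not) r
  have h2 := List.count_map_of_injective x not (fun a b h => by simpa using h) false
  simp only [Bool.not_false] at h2
  rw [h2] at h
  simpa using h

theorem rStat_eq_iff {w : List Bool} {i r : ℕ} (h1 : 1 ≤ i) (hi : i < w.count true) :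
    rStat w i = r ↔
      ∃ x y, w = x ++ true :: (List.replicate r false ++ true :: y) ∧ x.count true + 1 = i := by
  constructor
  · rintro rfl
    obtain ⟨x, r, y, rfl, rfl⟩ := exists_gap_split h1 hi
    simp only [Bool.not_true]
    rw [rStat_gap]
    exact ⟨x, y, rfl, rfl⟩
  · rintro ⟨x, y, rfl, rfl⟩
    exact rStat_gap x y r

theorem sStat_eq_iff {w : List Bool} {i r : ℕ} (h1 : 1 ≤ i) (hi : i < w.count false) :
    sStat w i = r ↔
      ∃ x y, w = x ++ false :: (List.replicate r true ++ false :: y) ∧ x.count false + 1 = i := by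
  constructor
  · rintro rfl
    obtain ⟨x, r, y, rfl, rfl⟩ := exists_gap_split h1 hi
    simp only [Bool.not_false]
    rw [sStat_gap]
    exact ⟨x, y, rfl, rfl⟩
  · rintro ⟨x, y, rfl, rfl⟩
    exact sStat_gap x y r

/-- The mirror image of a path. -/
def mirror (w : List Bool) : List Bool := (w.map not).reverse

theorem mirror_mirror (w : List Bool) : mirror (mirror w) = w := by
  simp [mirror, Function.comp_def]

theorem count_mirror (w : List Bool) (b : Bool) : (mirror w).count b = w.count (!b) := by
  have := List.count_map_of_injective w not (fun a b h => by simpa using h) (!b)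
  rw [Bool.not_not] at this
  rw [mirror, List.count_reverse, this]

theorem isDyckWord_mirror {n : ℕ} {w : List Bool} (h : IsDyckWord n w) :
    IsDyckWord n (mirror w) := by
  obtain ⟨h1, h2, h3, h4⟩ := h
  refine ⟨by simpa [mirror] using h1, by rw [count_mirror]; exact h3,
    by rw [count_mirror]; exact h2, ?_⟩
  rintro q ⟨t, ht⟩
  have hw : w = mirror t ++ mirror q := by
    rw [← mirror_mirror w, ← ht]
    simp [mirror]
  have h5 := h4 (mirror t) ⟨_, hw.symm⟩
  have e1 : (mirror t).count true + (mirror q).count true = n := by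
    rw [← List.count_append, ← hw, h2]
  have e2 : (mirror t).count false + (mirror q).count false = n := by
    rw [← List.count_append, ← hw, h3]
  rw [count_mirror] at e1 e2 h5
  rw [count_mirror] at e1 e2 h5
  simp only [Bool.not_true, Bool.not_false] at *
  omega

theorem sStat_mirror {n i : ℕ} {w : List Bool} (h : IsDyckWord n w) (h1 : 1 ≤ i) (hi : i < n) :
    sStat (mirror w) (n - i) = rStat w i := by
  obtain ⟨-, h2, h3, -⟩ := h
  obtain ⟨x, y, hw, hx⟩ := (rStat_eq_iff h1 (by omega : i < w.count true)).1 rfl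
  rw [sStat_eq_iff (by omega) (by rw [count_mirror]; simp; omega)]
  refine ⟨mirror y, mirror x, ?_, ?_⟩
  · nth_rewrite 1 [hw]
    simp [mirror]
  · rw [count_mirror]
    have h4 := congrArg (List.count true) hw
    simp [List.count_replicate] at h4 ⊢
    omega

theorem rStat_mirror {n i : ℕ} {w : List Bool} (h : IsDyckWord n w) (h1 : 1 ≤ i) (hi : i < n) :
    rStat (mirror w) (n - i) = sStat w i := by
  have h2 := sStat_mirror (isDyckWord_mirror h) (i := n - i) (by omega) (by omega)
  rw [mirror_mirror] at h2
  rw [← h2]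
  congr 1
  omega

theorem mirror_mem_dyckRS {n r s : ℕ} {w : List Bool} (h : w ∈ dyckRS n r s) :
    mirror w ∈ dyckRS n s r := by
  obtain ⟨hw, i, hi, hpos, hr, hs, hu⟩ := h
  rw [Finset.mem_Icc] at hi
  have hi' : i < n := by omega
  refine ⟨isDyckWord_mirror hw, n - i, by rw [Finset.mem_Icc]; omega, ?_, ?_, ?_, ?_⟩
  · rw [sStat_mirror hw hi.1 hi', rStat_mirror hw hi.1 hi']
    exact hpos.symm
  · rw [rStat_mirror hw hi.1 hi', hs]
  · rw [sStat_mirror hw hi.1 hi', hr]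
  · intro j hj hjpos
    rw [Finset.mem_Icc] at hj
    have e : j = n - (n - j) := by omega
    rw [e, sStat_mirror hw (by omega) (by omega), rStat_mirror hw (by omega) (by omega)] at hjpos
    have := hu (n - j) (by rw [Finset.mem_Icc]; omega) hjpos.symm
    omega

theorem ncard_dyckRS_comm (n r s : ℕ) : (dyckRS n r s).ncard = (dyckRS n s r).ncard := by
  have h : dyckRS n s r = mirror '' dyckRS n r s := by
    ext w
    constructor
    · intro hw
      exact ⟨mirror w, mirror_mem_dyckRS hw, mirror_mirror w⟩
    · rintro ⟨v, hv, rfl⟩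
      exact mirror_mem_dyckRS hv
  rw [h, Set.ncard_image_of_injective]
  exact Function.LeftInverse.injective mirror_mirror

theorem add_le_choose {r s : ℕ} (hr : 0 < r) (hs : 0 < s) : r + s ≤ (r + s).choose r := by
  induction r generalizing s with
  | zero => omega
  | succ r ih =>
    induction s with
    | zero => omega
    | succ s ih' =>
      rcases r with _ | r
      · simp
      · rcases s with _ | s
        · rw [Nat.choose_symm_add]
          simp
        · have h1 := ih (s := s + 1 + 1) (by omega) (by omega)
          have h2 := ih' (by omega)
          have h3 : r + 1 + 1 + (s + 1 + 1) = (r + 1 + (s + 1 + 1)) + 1 := by omega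
          rw [h3, Nat.choose_succ_succ]
          have h4 : r + 1 + 1 + (s + 1) = r + 1 + (s + 1 + 1) := by omega
          rw [h4] at h2
          simp only [Nat.succ_eq_add_one]
          omega

theorem choose_eq_prime {r s p : ℕ} (hp : p.Prime) (hr : 0 < r) (hs : 0 < s)
    (h : (r + s).choose r = p) : r = 1 ∧ s = p - 1 ∨ r = p - 1 ∧ s = 1 := by
  have h1 : p ≤ r + s := by
    rw [← hp.dvd_factorial, ← Nat.choose_mul_factorial_mul_factorial (Nat.le_add_right r s), h]
    exact Dvd.intro _ (by rw [mul_assoc])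
  have h2 := add_le_choose hr hs
  rcases Nat.lt_or_ge 1 r with hr1 | hr1
  · rcases Nat.lt_or_ge 1 s with hs1 | hs1
    · exfalso
      obtain ⟨r, rfl⟩ : ∃ r', r = r' + 1 := ⟨r - 1, by omega⟩
      have e : r + 1 + s = (r + s) + 1 := by omega
      rw [e, Nat.choose_succ_succ] at h
      have h3 := add_le_choose (r := r) (s := s) (by omega) (by omega)
      have h4 := add_le_choose (r := r + 1) (s := s - 1) (by omega) (by omega)
      have e2 : r + 1 + (s - 1) = r + s := by omega
      rw [e2] at h4
      simp only [Nat.succ_eq_add_one] at h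
      omega
    · right; omega
  · left; omega

theorem dyckL_eq_union {n p : ℕ} (hp : p.Prime) :
    dyckL n p = dyckRS n 1 (p - 1) ∪ dyckRS n (p - 1) 1 := by
  have hp2 := hp.two_le
  ext w
  constructor
  · rintro ⟨hw, hL⟩
    rw [LStat] at hL
    obtain ⟨i, hi, hdvd⟩ := hp.prime.exists_mem_finset_dvd (dvd_of_eq hL.symm)
    rw [← Finset.mul_prod_erase _ _ hi] at hL
    have hfi : (rStat w i + sStat w i).choose (rStat w i) = p :=
      Nat.dvd_antisymm (Dvd.intro _ hL) hdvd
    rw [hfi] at hL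
    have hone := Nat.eq_of_mul_eq_mul_left hp.pos (hL.trans (mul_one p).symm)
    rw [Finset.prod_eq_one_iff] at hone
    have hpos : 0 < rStat w i ∧ 0 < sStat w i := by
      by_contra hcon
      have : (rStat w i + sStat w i).choose (rStat w i) = 1 := by
        rw [Nat.choose_eq_one_iff]
        omega
      omega
    have hu : ∀ j ∈ Finset.Icc 1 (n - 1), 0 < rStat w j ∧ 0 < sStat w j → j = i := by
      intro j hj hjpos
      by_contra hne
      have := hone j (Finset.mem_erase.2 ⟨hne, hj⟩)
      rw [Nat.choose_eq_one_iff] at this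
      omega
    rcases choose_eq_prime hp hpos.1 hpos.2 hfi with ⟨h1, h2⟩ | ⟨h1, h2⟩
    · exact Or.inl ⟨hw, i, hi, hpos, h1, h2, hu⟩
    · exact Or.inr ⟨hw, i, hi, hpos, h1, h2, hu⟩
  · have key : ∀ r s, (r + s).choose r = p → w ∈ dyckRS n r s → w ∈ dyckL n p := by
      rintro r s hrs ⟨hw, i, hi, hpos, h1, h2, hu⟩
      refine ⟨hw, ?_⟩
      rw [LStat, ← Finset.mul_prod_erase _ _ hi, h1, h2, hrs, Finset.prod_eq_one, mul_one]
      intro j hj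
      rw [Finset.mem_erase] at hj
      have := mt (hu j hj.2) hj.1
      rw [Nat.choose_eq_one_iff]
      omega
    have e1 : 1 + (p - 1) = p := by omega
    have e2 : p - 1 + 1 = p := by omega
    rintro (h | h)
    · exact key _ _ (by rw [e1, Nat.choose_one_right]) h
    · exact key _ _ (by rw [Nat.choose_symm_add, e2, Nat.choose_one_right]) h

theorem finite_isDyckWord (n : ℕ) : {w | IsDyckWord n w}.Finite :=
  (List.finite_length_eq Bool (2 * n)).subset fun _ h => h.1

theorem ncard_dyckL {n p : ℕ} (hp : p.Prime) (hp3 : 3 ≤ p) :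
    (dyckL n p).ncard = 2 * (dyckRS n 1 (p - 1)).ncard := by
  have hfin : ∀ r s, (dyckRS n r s).Finite := fun r s =>
    (finite_isDyckWord n).subset fun _ h => h.1
  rw [dyckL_eq_union hp, Set.ncard_union_eq _ (hfin _ _) (hfin _ _), ncard_dyckRS_comm n (p - 1) 1,
    two_mul]
  rw [Set.disjoint_left]
  rintro w ⟨-, i, hi, hpos, h1, h2, -⟩ ⟨-, j, hj, -, h3, h4, hu⟩
  have := hu i hi hpos
  subst this
  omega

/-- The up steps of a path, flagged by whether the next step is a down step; `e` is the step
following the path. -/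
def upFollow (e : Bool) : List Bool → List Bool
  | [] => []
  | true :: w => (!(w.headD e)) :: upFollow e w
  | false :: w => upFollow e w

/-- The down steps of a path, flagged by whether the next step is an up step; `e` is the step
following the path. -/
def downFollow (e : Bool) : List Bool → List Bool
  | [] => []
  | true :: w => downFollow e w
  | false :: w => w.headD e :: downFollow e w

theorem headD_append {e : Bool} (x y : List Bool) : (x ++ y).headD e = x.headD (y.headD e) := by
  cases x <;> rfl

theorem upFollow_append (e : Bool) (x y : List Bool) :
    upFollow e (x ++ y) = upFollow (y.headD e) x ++ upFollow e y := by
  induction x with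
  | nil => rfl
  | cons b x ih => cases b <;> simp [upFollow, ih]

theorem downFollow_append (e : Bool) (x y : List Bool) :
    downFollow e (x ++ y) = downFollow (y.headD e) x ++ downFollow e y := by
  induction x with
  | nil => rfl
  | cons b x ih => cases b <;> simp [downFollow, ih]

theorem length_upFollow (e : Bool) (x : List Bool) : (upFollow e x).length = x.count true := by
  induction x with
  | nil => rfl
  | cons b x ih => cases b <;> simp [upFollow, ih]

theorem length_downFollow (e : Bool) (x : List Bool) :
    (downFollow e x).length = x.count false := by
  induction x with
  | nil => rfl
  | cons b x ih => cases b <;> simp [downFollow, ih]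

theorem count_upFollow (e : Bool) (x : List Bool) :
    (upFollow e x).count true + (if x.headD e then 0 else 1) =
      (downFollow e x).count true + (if e then 0 else 1) := by
  induction x with
  | nil => rfl
  | cons b x ih =>
    cases b <;> simp only [upFollow, downFollow, List.count_cons, List.headD_cons] <;>
      cases h : x.headD e <;> simp only [h] at ih <;> simp at ih ⊢ <;> omega

theorem EndsIn.cons {a b : Bool} {A : List Bool} (h : EndsIn a A) (hA : A = [] → b = a) :
    EndsIn a (b :: A) := by
  rcases h with rfl | ⟨A', rfl⟩
  · exact Or.inr ⟨[], by simp [hA rfl]⟩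
  · exact Or.inr ⟨b :: A', rfl⟩

theorem headD_of_upFollow_eq_nil {e : Bool} {x : List Bool} (h : upFollow e x = [])
    (he : e = false) : x.headD e = false := by
  rcases x with _ | ⟨_ | _, x⟩ <;> simp_all [upFollow]

theorem headD_of_downFollow_eq_nil {e : Bool} {x : List Bool} (h : downFollow e x = [])
    (he : e = true) : x.headD e = true := by
  rcases x with _ | ⟨_ | _, x⟩ <;> simp_all [downFollow]

theorem endsIn_upFollow (x : List Bool) : EndsIn true (upFollow false x) := by
  induction x with
  | nil => exact Or.inl rfl
  | cons b x ih =>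
    cases b
    · exact ih
    · exact ih.cons fun h => by rw [headD_of_upFollow_eq_nil h rfl]; rfl

theorem endsIn_downFollow (x : List Bool) : EndsIn true (downFollow true x) := by
  induction x with
  | nil => exact Or.inl rfl
  | cons b x ih =>
    cases b
    · exact ih.cons fun h => by rw [headD_of_downFollow_eq_nil h rfl]
    · exact ih

theorem eq_of_follow_eq {w v : List Bool} (hh : w.headD true = v.headD true)
    (hu : upFollow true w = upFollow true v) (hd : downFollow true w = downFollow true v) :
    w = v := by
  induction w generalizing v with
  | nil =>
    rcases v with _ | ⟨_ | _, v⟩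
    · rfl
    · simp [downFollow] at hd
    · simp [upFollow] at hu
  | cons b w ih =>
    rcases v with _ | ⟨c, v⟩
    · cases b <;> simp [upFollow, downFollow] at hu hd
    · simp only [List.headD_cons] at hh
      subst hh
      cases b <;> simp only [upFollow, downFollow, List.cons.injEq, Bool.not_inj_iff] at hu hd
      · rw [ih hd.1 hu hd.2]
      · rw [ih hu.1 hu.2 hd]

theorem EndsIn.of_cons {a b : Bool} {A : List Bool} (h : EndsIn a (b :: A)) : EndsIn a A := by
  rcases h with h | ⟨A', h⟩
  · simp at h
  · rcases A' with _ | ⟨c, A'⟩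
    · simp at h; exact Or.inl h.2
    · simp at h; exact Or.inr ⟨A', h.2⟩

theorem EndsIn.of_append {a : Bool} {A B : List Bool} (h : EndsIn a (A ++ B)) : EndsIn a B := by
  induction A with
  | nil => exact h
  | cons b A ih => exact ih h.of_cons

/-- The first step `c` and the two flag lists of a path can be prescribed. -/
theorem exists_follow_eq (a : List Bool) (b : List Bool) (c : Bool) (hb : EndsIn true b)
    (hc : b.count true = a.count true + (if c then 0 else 1)) :
    ∃ w : List Bool, w.headD true = c ∧ upFollow true w = a ∧ downFollow true w = b := by
  match c, a, b with
  | true, [], b =>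
    refine ⟨[], rfl, rfl, ?_⟩
    rcases hb with rfl | ⟨b', rfl⟩
    · rfl
    · simp at hc
  | true, true :: a, b =>
    have hc' : b.count true = a.count true + 1 := by simpa using hc
    obtain ⟨w, hw, hu, hd⟩ := exists_follow_eq a b false hb (by simpa using hc')
    exact ⟨true :: w, rfl, by rw [upFollow, hw, hu]; rfl, by simp [downFollow, hd]⟩
  | true, false :: a, b =>
    obtain ⟨w, hw, hu, hd⟩ := exists_follow_eq a b true hb (by simpa using hc)
    exact ⟨true :: w, rfl, by rw [upFollow, hw, hu]; rfl, by simp [downFollow, hd]⟩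
  | false, a, [] => simp at hc
  | false, a, true :: b =>
    obtain ⟨w, hw, hu, hd⟩ := exists_follow_eq a b true hb.of_cons (by simpa using hc)
    exact ⟨false :: w, rfl, by simp [upFollow, hu], by rw [downFollow, hw, hd]⟩
  | false, a, false :: b =>
    have hc' : b.count true = a.count true + 1 := by simpa using hc
    obtain ⟨w, hw, hu, hd⟩ := exists_follow_eq a b false hb.of_cons (by simpa using hc')
    exact ⟨false :: w, rfl, by simp [upFollow, hu], by rw [downFollow, hw, hd]⟩
termination_by a.length + b.length

/-- The Dyck condition in terms of the flag lists. -/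
theorem isDyckWord_iff_follow {n : ℕ} {w : List Bool} (hw : w.headD true = true) :
    IsDyckWord n w ↔ (upFollow true w).length = n ∧ (downFollow true w).length = n ∧
      ∀ j, ((upFollow true w).take j).count true ≤ ((downFollow true w).take j).count true := by
  rw [length_upFollow, length_downFollow]
  constructor
  · rintro ⟨-, h2, h3, h4⟩
    refine ⟨h2, h3, fun j => ?_⟩
    rcases lt_or_ge j n with hj | hj
    · obtain ⟨x, y, rfl, hx⟩ := exists_split_at_count (h2.symm ▸ hj)
      have h5 := h4 x (List.prefix_append _ _)
      have h6 := count_upFollow true x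
      rw [headD_append] at hw
      simp only [List.headD_cons] at hw
      rw [hw] at h6
      rw [upFollow_append, downFollow_append, List.take_left' (by rw [length_upFollow, hx])]
      simp only [List.headD_cons, add_left_inj] at h6 ⊢
      rw [h6]
      refine List.Sublist.count_le _ (List.IsPrefix.sublist ?_)
      rw [List.take_append, List.take_of_length_le (by rw [length_downFollow]; omega)]
      exact List.prefix_append _ _
    · have h6 := count_upFollow true w
      rw [hw] at h6
      rw [List.take_of_length_le (by rw [length_upFollow]; omega),
        List.take_of_length_le (by rw [length_downFollow]; omega)]
      simp at h6
      omega
  · rintro ⟨h2, h3, h4⟩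
    have h1 : w.length = 2 * n := by
      have : w.length = w.count true + w.count false := by
        rw [List.length_eq_countP_add_countP (· == true), List.count, List.count]
        congr 2
        funext b
        cases b <;> rfl
      omega
    refine ⟨h1, h2, h3, fun q => ?_⟩
    induction q using List.reverseRecOn with
    | nil => simp
    | append_singleton x b ih =>
      intro hq
      have ih' := ih ((List.prefix_append _ _).trans hq)
      obtain ⟨y, hy⟩ := hq
      cases b
      · by_contra hcon
        have hj : x.count false = x.count true := by simp at hcon; omega
        have h5 := h4 (x.count true)
        have h6 := count_upFollow false x
        rw [List.append_assoc] at hy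
        subst hy
        rw [headD_append] at hw
        simp only [List.singleton_append, List.headD_cons] at hw
        rw [hw] at h6
        rw [upFollow_append, downFollow_append, List.take_left' (length_upFollow _ _),
          List.take_left' (by rw [length_downFollow, hj])] at h5
        simp at h5 h6
        omega
      · simp; omega

theorem upFollow_replicate (k : ℕ) :
    upFollow false (List.replicate (k + 1) true) = List.replicate k false ++ [true] := by
  induction k with
  | zero => rfl
  | succ k ih =>
    rw [List.replicate_succ, upFollow, ih]
    rfl

theorem downFollow_replicate (k : ℕ) :
    downFollow true (List.replicate (k + 1) false) = List.replicate k false ++ [true] := by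
  induction k with
  | zero => rfl
  | succ k ih =>
    rw [List.replicate_succ, downFollow, ih]
    rfl

theorem upFollow_of_rStat_eq_zero {w : List Bool} {c : ℕ} (h1 : 1 ≤ c) (hc : c < w.count true)
    (hr : rStat w c = 0) : ∃ A A', upFollow true w = A ++ false :: A' ∧ A.length + 1 = c := by
  obtain ⟨x, y, rfl, hx⟩ := (rStat_eq_iff h1 hc).1 hr
  rw [upFollow_append]
  exact ⟨_, _, rfl, by rw [length_upFollow, hx]⟩

theorem downFollow_of_sStat_eq_zero {w : List Bool} {c : ℕ} (h1 : 1 ≤ c) (hc : c < w.count false)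
    (hs : sStat w c = 0) : ∃ B B', downFollow true w = B ++ false :: B' ∧ B.length + 1 = c := by
  obtain ⟨x, y, rfl, hx⟩ := (sStat_eq_iff h1 hc).1 hs
  rw [downFollow_append]
  exact ⟨_, _, rfl, by rw [length_downFollow, hx]⟩

theorem follow_of_rStat_eq_succ {w : List Bool} (hw : w.headD true = true) {c k : ℕ} (h1 : 1 ≤ c)
    (hc : c < w.count true) (hr : rStat w c = k + 1) :
    ∃ A A' B B', upFollow true w = A ++ true :: A' ∧ A.length + 1 = c ∧
      downFollow true w = B ++ (List.replicate k false ++ true :: B') ∧ EndsIn true B ∧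
      B.count true = A.count true := by
  obtain ⟨x, y, rfl, hx⟩ := (rStat_eq_iff h1 hc).1 hr
  refine ⟨upFollow true x, upFollow true (List.replicate (k + 1) false ++ true :: y),
    downFollow true x, downFollow true y, ?_, by rw [length_upFollow, hx], ?_,
    endsIn_downFollow x, ?_⟩
  · rw [upFollow_append]
    rfl
  · have := downFollow_append true (List.replicate (k + 1) false) (true :: y)
    simp only [List.headD_cons, downFollow_replicate] at this
    rw [downFollow_append, List.headD_cons, downFollow, this, downFollow, List.append_assoc]
    rfl
  · have h := count_upFollow true x
    rw [headD_append, List.headD_cons] at hw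
    rw [hw] at h
    simpa using h.symm

theorem follow_of_sStat_eq_succ {w : List Bool} (hw : w.headD true = true) {c k : ℕ} (h1 : 1 ≤ c)
    (hc : c < w.count false) (hs : sStat w c = k + 1) :
    ∃ A A' B B', downFollow true w = B ++ true :: B' ∧ B.length + 1 = c ∧
      upFollow true w = A ++ (List.replicate k false ++ true :: A') ∧ EndsIn true A ∧
      A.count true = B.count true + 1 := by
  obtain ⟨x, y, rfl, hx⟩ := (sStat_eq_iff h1 hc).1 hs
  refine ⟨upFollow false x, upFollow true y, downFollow false x,
    downFollow true (List.replicate (k + 1) true ++ false :: y), ?_,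
    by rw [length_downFollow, hx], ?_, endsIn_upFollow x, ?_⟩
  · rw [downFollow_append]
    rfl
  · have := upFollow_append true (List.replicate (k + 1) true) (false :: y)
    simp only [List.headD_cons, upFollow_replicate] at this
    rw [upFollow_append, List.headD_cons, upFollow, this, upFollow, List.append_assoc]
    rfl
  · have h := count_upFollow false x
    rw [headD_append, List.headD_cons] at hw
    rw [hw] at h
    simpa using h

theorem getElem?_length_append {α : Type*} (A B : List α) (b : α) {i : ℕ}
    (h : A.length + 1 = i) : (A ++ b :: B)[i - 1]? = some b := by
  subst h
  simp

theorem rStat_pos_iff {w : List Bool} (hw : w.headD true = true) {i : ℕ} (h1 : 1 ≤ i)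
    (hi : i < w.count true) : 0 < rStat w i ↔ (upFollow true w)[i - 1]? = some true := by
  rcases h : rStat w i with _ | k
  · obtain ⟨A, A', hA, hl⟩ := upFollow_of_rStat_eq_zero h1 hi h
    simp [hA, getElem?_length_append A A' false hl]
  · obtain ⟨A, A', B, B', hA, hl, -⟩ := follow_of_rStat_eq_succ hw h1 hi h
    simp [hA, getElem?_length_append A A' true hl]

theorem sStat_pos_iff {w : List Bool} (hw : w.headD true = true) {i : ℕ} (h1 : 1 ≤ i)
    (hi : i < w.count false) : 0 < sStat w i ↔ (downFollow true w)[i - 1]? = some true := by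
  rcases h : sStat w i with _ | k
  · obtain ⟨A, A', hA, hl⟩ := downFollow_of_sStat_eq_zero h1 hi h
    simp [hA, getElem?_length_append A A' false hl]
  · obtain ⟨A, A', B, B', hA, hl, -⟩ := follow_of_sStat_eq_succ hw h1 hi h
    simp [hA, getElem?_length_append B B' true hl]

theorem replicate_append_true_inj {k l : ℕ} {B B' : List Bool}
    (h : List.replicate k false ++ true :: B = List.replicate l false ++ true :: B') : k = l := by
  induction k generalizing l with
  | zero => cases l <;> simp_all [List.replicate_succ]
  | succ k ih =>
    cases l
    · simp [List.replicate_succ] at h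
    · simp only [List.replicate_succ, List.cons_append, List.cons.injEq, true_and] at h
      rw [ih h]

/-- The value of `rStat` at a peak can be read off the flag lists. -/
theorem rStat_eq_succ_iff {w A A' : List Bool} (hw : w.headD true = true) {c k : ℕ}
    (hc : c < w.count true) (hA : upFollow true w = A ++ true :: A') (hl : A.length + 1 = c) :
    rStat w c = k + 1 ↔ ∃ B B', downFollow true w = B ++ (List.replicate k false ++ true :: B') ∧
      EndsIn true B ∧ B.count true = A.count true := by
  have h1 : 1 ≤ c := by omega
  have key : ∀ k, rStat w c = k + 1 →
      ∃ B B', downFollow true w = B ++ (List.replicate k false ++ true :: B') ∧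
        EndsIn true B ∧ B.count true = A.count true := by
    intro k h
    obtain ⟨C, C', B, B', hC, hCl, hB, hE, hcount⟩ := follow_of_rStat_eq_succ hw h1 hc h
    obtain ⟨rfl, -⟩ := List.append_inj (hC.symm.trans hA) (by omega)
    exact ⟨B, B', hB, hE, hcount⟩
  refine ⟨key k, ?_⟩
  rintro ⟨B, B', hB, hE, hcount⟩
  have hpos := (rStat_pos_iff hw h1 hc).2 (by rw [hA, getElem?_length_append A A' true hl])
  obtain ⟨C, C', hC, hCE, hCcount⟩ := key (rStat w c - 1) (by omega)
  obtain rfl := hE.eq_of_append_eq hCE (hB.symm.trans hC) (by omega)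
  have := replicate_append_true_inj (List.append_cancel_left (hB.symm.trans hC))
  omega

/-- The value of `sStat` at a valley can be read off the flag lists. -/
theorem sStat_eq_succ_iff {w B B' : List Bool} (hw : w.headD true = true) {c k : ℕ}
    (hc : c < w.count false) (hB : downFollow true w = B ++ true :: B') (hl : B.length + 1 = c) :
    sStat w c = k + 1 ↔ ∃ A A', upFollow true w = A ++ (List.replicate k false ++ true :: A') ∧
      EndsIn true A ∧ A.count true = B.count true + 1 := by
  have h1 : 1 ≤ c := by omega
  have key : ∀ k, sStat w c = k + 1 →
      ∃ A A', upFollow true w = A ++ (List.replicate k false ++ true :: A') ∧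
        EndsIn true A ∧ A.count true = B.count true + 1 := by
    intro k h
    obtain ⟨A, A', C, C', hC, hCl, hA, hE, hcount⟩ := follow_of_sStat_eq_succ hw h1 hc h
    obtain ⟨rfl, -⟩ := List.append_inj (hC.symm.trans hB) (by omega)
    exact ⟨A, A', hA, hE, hcount⟩
  refine ⟨key k, ?_⟩
  rintro ⟨A, A', hA, hE, hcount⟩
  have hpos := (sStat_pos_iff hw h1 hc).2 (by rw [hB, getElem?_length_append B B' true hl])
  obtain ⟨C, C', hC, hCE, hCcount⟩ := key (sStat w c - 1) (by omega)
  obtain rfl := hE.eq_of_append_eq hCE (hA.symm.trans hC) (by omega)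
  have := replicate_append_true_inj (List.append_cancel_left (hA.symm.trans hC))
  omega

theorem count_downFlags (W : List (Option Bool)) :
    (downFlags W).count true = W.count (some false) := by
  induction W with
  | nil => rfl
  | cons a W ih => rcases a with _ | _ | _ <;> simpa [downFlags] using ih

theorem count_upFlags (W : List (Option Bool)) :
    (upFlags W).count true = W.count (some true) := by
  induction W with
  | nil => rfl
  | cons a W ih => rcases a with _ | _ | _ <;> simpa [upFlags] using ih

theorem downFlags_append (V W : List (Option Bool)) :
    downFlags (V ++ W) = downFlags V ++ downFlags W := List.map_append

theorem upFlags_append (V W : List (Option Bool)) :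
    upFlags (V ++ W) = upFlags V ++ upFlags W := List.map_append

theorem downFlags_eq_append_cons {W : List (Option Bool)} {A A' : List Bool}
    (h : downFlags W = A ++ true :: A') :
    ∃ V U, W = V ++ some false :: U ∧ downFlags V = A ∧ downFlags U = A' := by
  obtain ⟨V, U, rfl, hV, hU⟩ := List.map_eq_append_iff.1 h
  obtain ⟨a, U, rfl, ha, hU⟩ := List.map_eq_cons_iff.1 hU
  rw [beq_iff_eq] at ha
  exact ⟨V, U, by rw [ha], hV, hU⟩

theorem upFlags_eq_append_cons {W : List (Option Bool)} {A A' : List Bool}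
    (h : upFlags W = A ++ true :: A') :
    ∃ V U, W = V ++ some true :: U ∧ upFlags V = A ∧ upFlags U = A' := by
  obtain ⟨V, U, rfl, hV, hU⟩ := List.map_eq_append_iff.1 h
  obtain ⟨a, U, rfl, ha, hU⟩ := List.map_eq_cons_iff.1 hU
  rw [beq_iff_eq] at ha
  exact ⟨V, U, by rw [ha], hV, hU⟩

theorem endsIn_upFlags_iff {W : List (Option Bool)} :
    EndsIn true (upFlags W) ↔ EndsIn (some true) W := by
  constructor
  · rintro (h | ⟨A, h⟩)
    · exact Or.inl (List.map_eq_nil_iff.1 h)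
    · obtain ⟨V, U, rfl, -, hU⟩ := upFlags_eq_append_cons h
      obtain rfl := List.map_eq_nil_iff.1 hU
      exact Or.inr ⟨V, rfl⟩
  · rintro (rfl | ⟨V, rfl⟩)
    · exact Or.inl rfl
    · exact Or.inr ⟨upFlags V, upFlags_append _ _⟩

/-- The first flag list of a pair of words separated by a common marked position. -/
def pairUps (Y Z : List (Option Bool)) : List Bool :=
  downFlags Y ++ true :: (downFlags Z ++ [true])

/-- The second flag list of a pair of words separated by a common marked position. -/
def pairDowns (Y Z : List (Option Bool)) : List Bool :=
  upFlags Y ++ true :: (upFlags Z ++ [true])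

theorem walk_of_mem_starPairs {k N : ℕ} {Y Z : List (Option Bool)} (h : (Y, Z) ∈ starPairs k N) :
    Walk 0 (Y ++ Z) 0 := by
  obtain ⟨-, ⟨rfl, hZ, -⟩ | ⟨q, hY, hZ⟩⟩ := h
  · exact hZ
  · obtain ⟨g, V, ⟨hV, -⟩, W, ⟨hW1, hW2⟩, rfl⟩ := Set.mem_iUnion.1 hY
    obtain ⟨m, W', ⟨hW1', hW2'⟩, U, ⟨hU, -⟩, rfl⟩ := Set.mem_iUnion.1 hZ
    rw [walk_append]
    refine ⟨q + 1, (walk_append _ _ _ _).2 ⟨g, hV, ?_⟩, (walk_append _ _ _ _).2 ⟨m + 1, ?_, hU⟩⟩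
    · exact walk_of_count_le (h := g + 1) (by omega) (by omega)
    · exact walk_of_count_le (by omega) (by omega)

theorem pairDowns_of_mem_starPairs {k N : ℕ} {Y Z : List (Option Bool)}
    (h : (Y, Z) ∈ starPairs k N) :
    ∃ B B', pairDowns Y Z = B ++ true :: B' ∧ EndsIn true B ∧
      B.count true = (downFlags Y).count true := by
  obtain ⟨-, ⟨rfl, -⟩ | ⟨q, hY, -⟩⟩ := h
  · exact ⟨[], _, rfl, Or.inl rfl, rfl⟩
  · obtain ⟨g, V, ⟨hV, hE⟩, W, ⟨hW1, hW2⟩, rfl⟩ := Set.mem_iUnion.1 hY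
    refine ⟨upFlags V, upFlags W ++ true :: (upFlags Z ++ [true]), ?_,
      endsIn_upFlags_iff.2 hE, ?_⟩
    · rw [pairDowns, upFlags_append, List.append_assoc]
      rfl
    · have := hV.count_eq
      simp [count_upFlags, count_downFlags]
      omega

theorem pairUps_of_mem_starPairs {k N : ℕ} {Y Z : List (Option Bool)}
    (h : (Y, Z) ∈ starPairs k N) :
    ∃ A A', pairUps Y Z = A ++ (List.replicate k false ++ true :: A') ∧ EndsIn true A ∧
      A.count true = (upFlags Y).count true + 1 := by
  obtain ⟨-, ⟨rfl, -, a, ha⟩ | ⟨q, hY, hZ⟩⟩ := h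
  · refine ⟨[true], a, ?_, Or.inr ⟨[], rfl⟩, rfl⟩
    rw [← ha]
    rfl
  · have hc := count_of_mem_leftWords hY
    dsimp only at hc
    obtain ⟨m, W, ⟨hW1, hW2⟩, U, ⟨-, a, ha⟩, rfl⟩ := Set.mem_iUnion.1 hZ
    refine ⟨downFlags Y ++ true :: (downFlags W ++ [true]), a, ?_,
      Or.inr ⟨downFlags Y ++ true :: downFlags W, by simp⟩, ?_⟩
    · rw [← ha, pairUps, downFlags_append]
      simp [downFlags]
    · simp [count_upFlags, count_downFlags]
      omega

theorem left_cases {Y Z : List (Option Bool)} {m : ℕ} (hY : Walk 0 Y m) {B B' : List Bool}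
    (hB : pairDowns Y Z = B ++ true :: B') (hE : EndsIn true B)
    (hcount : B.count true = (downFlags Y).count true) :
    Y = [] ∨ ∃ q, Y ∈ leftWords q := by
  have hm := hY.count_eq
  rw [count_downFlags] at hcount
  rw [pairDowns] at hB
  have hnil : B = upFlags Y → Y = [] := by
    rintro rfl
    rcases endsIn_upFlags_iff.1 hE with h | ⟨V, rfl⟩
    · exact h
    · exfalso
      obtain ⟨j, -, hj⟩ := (walk_append _ _ _ _).1 hY
      have := hj.count_eq
      rw [count_upFlags] at hcount
      simp at this
      omega
  rcases List.append_eq_append_iff.1 hB with ⟨c, hc, hc'⟩ | ⟨c, hc, hc'⟩ <;> rcases c with _ | ⟨b, c⟩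
  · exact Or.inl (hnil (by rw [hc, List.append_nil]))
  · exfalso
    simp only [List.cons_append, List.cons.injEq] at hc'
    rw [hc, List.count_append, count_upFlags, ← hc'.1] at hcount
    simp at hcount
    omega
  · exact Or.inl (hnil (by rw [hc, List.append_nil]))
  · right
    simp only [List.cons_append, List.cons.injEq] at hc'
    rw [← hc'.1] at hc
    obtain ⟨V, W, rfl, rfl, -⟩ := upFlags_eq_append_cons hc
    obtain ⟨g, hV, -⟩ := (walk_append _ _ _ _).1 hY
    have hg := hV.count_eq
    rw [count_upFlags] at hcount
    simp at hcount
    exact ⟨W.count (some true), Set.mem_iUnion.2 ⟨g, V, ⟨hV, endsIn_upFlags_iff.1 hE⟩, W,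
      ⟨by omega, rfl⟩, rfl⟩⟩

theorem mem_starPairs_of_flags {k : ℕ} {Y Z : List (Option Bool)} (hw : Walk 0 (Y ++ Z) 0)
    (hB : ∃ B B', pairDowns Y Z = B ++ true :: B' ∧ EndsIn true B ∧
      B.count true = (downFlags Y).count true)
    (hA : ∃ A A', pairUps Y Z = A ++ (List.replicate k false ++ true :: A') ∧ EndsIn true A ∧
      A.count true = (upFlags Y).count true + 1) :
    (Y, Z) ∈ starPairs k (Y.length + Z.length) := by
  obtain ⟨B, B', hB, hBE, hBc⟩ := hB
  obtain ⟨A, A', hA, hAE, hAc⟩ := hA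
  obtain ⟨m, hY, hZ⟩ := (walk_append _ _ _ _).1 hw
  refine ⟨rfl, ?_⟩
  rcases left_cases hY hB hBE hBc with rfl | ⟨q, hq⟩
  · left
    have hm : 0 = m := by simpa [Walk] using hY
    subst hm
    refine ⟨rfl, hZ, A', ?_⟩
    rcases A with _ | ⟨a, A⟩
    · simp at hAc
    · simp only [pairUps, downFlags, List.map_nil, List.nil_append, List.cons_append,
        List.cons.injEq] at hA
      obtain ⟨rfl, hA⟩ := hA
      have hA0 : A.count true = 0 := by simpa [upFlags] using hAc
      rcases hAE.of_cons with rfl | ⟨C, rfl⟩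
      · exact hA
      · simp at hA0
  · right
    refine ⟨q, hq, ?_⟩
    have hc := count_of_mem_leftWords hq
    have hm := hY.count_eq
    rw [count_upFlags] at hAc
    rw [pairUps] at hA
    have hex : ∃ c, true :: (downFlags Z ++ [true]) = c ++ (List.replicate k false ++ true :: A') ∧
        A = downFlags Y ++ c := by
      rcases List.append_eq_append_iff.1 hA with ⟨c, hc, hc'⟩ | ⟨c, hc1, hc'⟩
      · exact ⟨c, hc', hc⟩
      · exfalso
        have := congrArg (List.count true) hc1
        rw [count_downFlags, List.count_append] at this
        omega
    obtain ⟨c, hc', rfl⟩ := hex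
    rw [List.count_append, count_downFlags] at hAc
    rcases hAE.of_append with rfl | ⟨c, rfl⟩
    · simp at hAc; omega
    rcases c with _ | ⟨b, c⟩
    · simp at hAc; omega
    simp only [List.cons_append, List.cons.injEq] at hc'
    obtain ⟨rfl, hc'⟩ := hc'
    have hcq : c.count true = q := by simp at hAc; omega
    obtain ⟨R, hR, hR'⟩ : ∃ R, downFlags Z = c ++ true :: R ∧
        R ++ [true] = List.replicate k false ++ true :: A' := by
      rcases List.eq_nil_or_concat A' with rfl | ⟨A'', a, rfl⟩
      · refine ⟨List.replicate k false, ?_, rfl⟩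
        refine List.append_cancel_right (bs := [true]) ?_
        rw [hc']
        simp
      · have e : downFlags Z ++ [true] =
            (c ++ true :: (List.replicate k false ++ true :: A'')) ++ [a] := by
          rw [hc']
          simp
        obtain ⟨e1, e2⟩ := List.append_inj' e rfl
        refine ⟨_, e1, ?_⟩
        rw [e2]
        simp
    obtain ⟨W, U, rfl, rfl, rfl⟩ := downFlags_eq_append_cons hR
    rw [count_downFlags] at hcq
    obtain ⟨j, hW, hU⟩ := (walk_append _ _ _ _).1 hZ
    have hj := hW.count_eq
    refine Set.mem_iUnion.2 ⟨W.count (some true), W, ⟨hcq, rfl⟩, U, ⟨?_, A', hR'⟩, rfl⟩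
    obtain rfl : j = W.count (some true) + 1 := by omega
    exact hU

theorem length_downFlags (W : List (Option Bool)) : (downFlags W).length = W.length :=
  List.length_map _

theorem length_upFlags (W : List (Option Bool)) : (upFlags W).length = W.length :=
  List.length_map _

theorem exists_flags {A B : List Bool} (hl : A.length = B.length)
    (h : ∀ j : ℕ, A[j]? = some true → B[j]? = some true → False) :
    ∃ W, downFlags W = A ∧ upFlags W = B := by
  induction A generalizing B with
  | nil =>
    obtain rfl : B = [] := List.length_eq_zero_iff.1 hl.symm
    exact ⟨[], rfl, rfl⟩
  | cons a A ih =>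
    rcases B with _ | ⟨b, B⟩
    · simp at hl
    · obtain ⟨W, rfl, rfl⟩ := ih (B := B) (by simpa using hl)
        fun j h1 h2 => h (j + 1) (by simpa using h1) (by simpa using h2)
      cases a <;> cases b
      · exact ⟨none :: W, rfl, rfl⟩
      · exact ⟨some true :: W, rfl, rfl⟩
      · exact ⟨some false :: W, rfl, rfl⟩
      · exact (h 0 rfl rfl).elim

theorem flags_not_both {W : List (Option Bool)} {j : ℕ} (h1 : (downFlags W)[j]? = some true)
    (h2 : (upFlags W)[j]? = some true) : False := by
  rw [downFlags, List.getElem?_map, Option.map_eq_some_iff] at h1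
  rw [upFlags, List.getElem?_map, Option.map_eq_some_iff] at h2
  obtain ⟨a, ha, ha'⟩ := h1
  obtain ⟨b, hb, hb'⟩ := h2
  rw [ha, Option.some_inj] at hb
  subst hb
  rw [beq_iff_eq] at ha' hb'
  simp [ha'] at hb'

theorem eq_of_flags_eq {V W : List (Option Bool)} (h1 : downFlags V = downFlags W)
    (h2 : upFlags V = upFlags W) : V = W := by
  induction V generalizing W with
  | nil => exact (List.map_eq_nil_iff.1 h1.symm).symm
  | cons a V ih =>
    rcases W with _ | ⟨b, W⟩
    · simp [downFlags] at h1
    · simp only [downFlags, upFlags, List.map_cons, List.cons.injEq] at h1 h2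
      rw [ih h1.2 h2.2]
      rcases a with _ | _ | _ <;> rcases b with _ | _ | _ <;> simp at h1 h2 ⊢

theorem pair_eq_of_flags_eq {Y Z Y' Z' : List (Option Bool)} (h1 : pairUps Y Z = pairUps Y' Z')
    (h2 : pairDowns Y Z = pairDowns Y' Z') : Y = Y' ∧ Z = Z' := by
  have key : ∀ {Y Z Y' Z' : List (Option Bool)}, pairUps Y Z = pairUps Y' Z' →
      pairDowns Y Z = pairDowns Y' Z' → Y'.length ≤ Y.length := by
    intro Y Z Y' Z' h1 h2
    by_contra! hlt
    have e1 : (pairUps Y Z)[Y.length]? = some true := by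
      rw [pairUps, ← length_downFlags Y]
      simp
    have e2 : (pairDowns Y Z)[Y.length]? = some true := by
      rw [pairDowns, ← length_upFlags Y]
      simp
    rw [h1, pairUps, List.getElem?_append_left (by rwa [length_downFlags])] at e1
    rw [h2, pairDowns, List.getElem?_append_left (by rwa [length_upFlags])] at e2
    exact flags_not_both e1 e2
  have hl : Y.length = Y'.length := le_antisymm (key h1.symm h2.symm) (key h1 h2)
  obtain ⟨d1, d2⟩ := List.append_inj h1 (by rw [length_downFlags, length_downFlags, hl])
  obtain ⟨u1, u2⟩ := List.append_inj h2 (by rw [length_upFlags, length_upFlags, hl])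
  rw [List.cons.injEq] at d2 u2
  exact ⟨eq_of_flags_eq d1 u1,
    eq_of_flags_eq (List.append_cancel_right d2.2) (List.append_cancel_right u2.2)⟩

theorem take_count_le_insert_true {A A' B B' : List Bool} (hl : A.length = B.length) :
    (∀ j, ((A ++ true :: A').take j).count true ≤ ((B ++ true :: B').take j).count true) ↔
      ∀ j, ((A ++ A').take j).count true ≤ ((B ++ B').take j).count true := by
  have hA : ∀ i, A.length ≤ i → A.take i = A := fun i => List.take_of_length_le
  have hB : ∀ i, A.length ≤ i → B.take i = B := fun i hi => List.take_of_length_le (hl ▸ hi)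
  constructor <;> intro h j <;> rcases le_or_gt j A.length with hj | hj
  · simpa [List.take_append, Nat.sub_eq_zero_of_le hj, Nat.sub_eq_zero_of_le (hl ▸ hj)] using h j
  · obtain ⟨i, rfl⟩ : ∃ i, j = A.length + i := ⟨j - A.length, by omega⟩
    have := h (A.length + i + 1)
    have e : A.length + i + 1 - A.length = i + 1 := by omega
    have e2 : A.length + i - A.length = i := by omega
    simp only [List.take_append, List.count_append, ← hl, e, e2, List.take_succ_cons,
      List.count_cons_self,
      hA (A.length + i) (by omega), hA (A.length + i + 1) (by omega),
      hB (A.length + i) (by omega), hB (A.length + i + 1) (by omega)] at this ⊢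
    omega
  · simpa [List.take_append, Nat.sub_eq_zero_of_le hj, Nat.sub_eq_zero_of_le (hl ▸ hj)] using h j
  · obtain ⟨i, rfl⟩ : ∃ i, j = A.length + i + 1 := ⟨j - A.length - 1, by omega⟩
    have := h (A.length + i)
    have e : A.length + i + 1 - A.length = i + 1 := by omega
    have e2 : A.length + i - A.length = i := by omega
    simp only [List.take_append, List.count_append, ← hl, e, e2, List.take_succ_cons,
      List.count_cons_self,
      hA (A.length + i) (by omega), hA (A.length + i + 1) (by omega),
      hB (A.length + i) (by omega), hB (A.length + i + 1) (by omega)] at this ⊢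
    omega

theorem walk_iff_take_count (X : List (Option Bool)) :
    Walk 0 X 0 ↔ (downFlags X).count true = (upFlags X).count true ∧
      ∀ j, ((downFlags X).take j).count true ≤ ((upFlags X).take j).count true := by
  have h : ∀ j, ((downFlags X).take j).count true = (X.take j).count (some false) ∧
      ((upFlags X).take j).count true = (X.take j).count (some true) := fun j => by
    rw [← count_downFlags, ← count_upFlags, downFlags, upFlags, downFlags, upFlags,
      List.map_take, List.map_take]
    exact ⟨rfl, rfl⟩
  rw [walk_iff_prefix, count_downFlags, count_upFlags]
  simp only [zero_add, h]
  constructor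
  · rintro ⟨h1, h2⟩
    exact ⟨h1.symm, fun j => h2 _ (List.take_prefix _ _)⟩
  · rintro ⟨h1, h2⟩
    refine ⟨h1.symm, fun q hq => ?_⟩
    rw [List.prefix_iff_eq_take.1 hq]
    exact h2 _

theorem pair_take_count_le_iff (Y Z : List (Option Bool)) :
    (∀ j, ((pairUps Y Z).take j).count true ≤ ((pairDowns Y Z).take j).count true) ↔
      ∀ j, ((downFlags (Y ++ Z)).take j).count true ≤ ((upFlags (Y ++ Z)).take j).count true := by
  rw [pairUps, pairDowns, take_count_le_insert_true (by rw [length_downFlags, length_upFlags]),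
    ← List.append_assoc, ← List.append_assoc, ← downFlags_append, ← upFlags_append,
    take_count_le_insert_true (by rw [length_downFlags, length_upFlags]),
    List.append_nil, List.append_nil]

theorem headD_of_isDyckWord {n : ℕ} {w : List Bool} (h : IsDyckWord n w) :
    w.headD true = true := by
  rcases w with _ | ⟨_ | _, w⟩
  · rfl
  · simpa using h.2.2.2 [false] ⟨w, rfl⟩
  · rfl

theorem exists_starPair_of_mem_dyckRS {n k : ℕ} {w : List Bool} (h : w ∈ dyckRS n 1 (k + 1)) :
    ∃ Y Z, (Y, Z) ∈ starPairs k (n - 2) ∧ upFollow true w = pairUps Y Z ∧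
      downFollow true w = pairDowns Y Z := by
  obtain ⟨hD, c, hc, -, hr, hs, hu⟩ := h
  have hw := headD_of_isDyckWord hD
  rw [Finset.mem_Icc] at hc
  obtain ⟨-, hn1, hn2, -⟩ := id hD
  obtain ⟨hl1, hl2, hle⟩ := (isDyckWord_iff_follow hw).1 hD
  have hcount := count_upFollow true w
  simp only [hw, if_true, add_zero] at hcount
  obtain ⟨A, A', -, -, hA, hAl, -⟩ := follow_of_rStat_eq_succ (k := 0) hw hc.1 (by omega) hr
  obtain ⟨-, -, B, B', hB, hBl, -⟩ := follow_of_sStat_eq_succ hw hc.1 (by omega) hs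
  have hr' := (rStat_eq_succ_iff (k := 0) hw (by omega) hA hAl).1 hr
  have hs' := (sStat_eq_succ_iff hw (by omega) hB hBl).1 hs
  have hE := endsIn_downFollow w
  have hstar : ∀ j : ℕ, j + 1 < n → (upFollow true w)[j]? = some true →
      (downFollow true w)[j]? = some true → j + 1 = c := by
    intro j hj h1 h2
    refine hu (j + 1) (by rw [Finset.mem_Icc]; omega) ⟨?_, ?_⟩
    · exact (rStat_pos_iff hw (by omega) (by omega)).2 h1
    · exact (sStat_pos_iff hw (by omega) (by omega)).2 h2
  generalize upFollow true w = α at *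
  generalize downFollow true w = β at *
  subst hA hB
  simp only [List.length_append, List.length_cons] at hl1 hl2
  obtain rfl | ⟨A'', a, rfl⟩ := List.eq_nil_or_concat' A'
  · simp at hl1; omega
  obtain rfl | ⟨B'', b, rfl⟩ := List.eq_nil_or_concat' B'
  · simp at hl2; omega
  simp only [List.length_append, List.length_cons, List.length_nil] at hl1 hl2
  obtain rfl : b = true := by
    rcases hE with h | ⟨C, h⟩
    · simp at h
    · rw [← List.cons_append, ← List.append_assoc] at h
      simpa using (List.append_inj' h rfl).2
  obtain rfl : a = true := by
    by_contra hcon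
    obtain rfl : a = false := by simpa using hcon
    have h1 := hle (n - 1)
    rw [← List.cons_append, ← List.append_assoc, List.take_left' (by simp; omega),
      ← List.cons_append, ← List.append_assoc, List.take_left' (by simp; omega)] at h1
    simp at h1 hcount
    omega
  obtain ⟨Y, rfl, rfl⟩ := exists_flags (A := A) (B := B) (by omega) (by
    intro j h1 h2
    have hj := (List.getElem?_eq_some_iff.1 h1).1
    have := hstar j (by omega) (by rw [List.getElem?_append_left hj, h1])
      (by rw [List.getElem?_append_left (by omega), h2])
    omega)
  obtain ⟨Z, rfl, rfl⟩ := exists_flags (A := A'') (B := B'') (by omega) (by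
    intro j h1 h2
    have hj := (List.getElem?_eq_some_iff.1 h1).1
    have e : ∀ C C' : List Bool, C.length + 1 = c → j < C'.length →
        (C ++ true :: (C' ++ [true]))[c + j]? = C'[j]? := by
      intro C C' hC hj
      rw [List.getElem?_append_right (by omega), show c + j - C.length = j + 1 by omega,
        List.getElem?_cons_succ, List.getElem?_append_left hj]
    have := hstar (c + j) (by omega) (by rw [e _ _ hAl hj, h1])
      (by rw [e _ _ hBl (by omega), h2])
    omega)
  refine ⟨Y, Z, ?_, rfl, rfl⟩
  rw [length_downFlags] at hAl hl1
  rw [length_downFlags] at hl1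
  rw [show n - 2 = Y.length + Z.length by omega]
  refine mem_starPairs_of_flags ?_ hr' hs'
  rw [walk_iff_take_count]
  refine ⟨?_, (pair_take_count_le_iff Y Z).1 hle⟩
  simp at hcount
  rw [downFlags_append, upFlags_append, List.count_append, List.count_append]
  omega

theorem exists_mem_dyckRS_of_starPair {n k : ℕ} (hn : 2 ≤ n) {Y Z : List (Option Bool)}
    (h : (Y, Z) ∈ starPairs k (n - 2)) :
    ∃ w ∈ dyckRS n 1 (k + 1), upFollow true w = pairUps Y Z ∧
      downFollow true w = pairDowns Y Z := by
  have hlen : Y.length + Z.length = n - 2 := h.1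
  have hW := walk_of_mem_starPairs h
  have hr := pairDowns_of_mem_starPairs h
  have hs := pairUps_of_mem_starPairs h
  rw [walk_iff_take_count] at hW
  obtain ⟨hcount, hle⟩ := hW
  rw [downFlags_append, upFlags_append, List.count_append, List.count_append] at hcount
  obtain ⟨w, hw, hA, hB⟩ := exists_follow_eq (pairUps Y Z) (pairDowns Y Z) true
    (Or.inr ⟨upFlags Y ++ true :: upFlags Z, by simp [pairDowns]⟩) (by
      simp [pairUps, pairDowns]
      omega)
  have hD : IsDyckWord n w := by
    rw [isDyckWord_iff_follow hw, hA, hB, pair_take_count_le_iff]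
    refine ⟨?_, ?_, hle⟩
    · simp [pairUps, length_downFlags]
      omega
    · simp [pairDowns, length_upFlags]
      omega
  obtain ⟨-, hn1, hn2, -⟩ := id hD
  rw [← hA] at hs
  rw [← hB] at hr
  have hr1 : rStat w (Y.length + 1) = 0 + 1 :=
    (rStat_eq_succ_iff hw (by omega) hA (by rw [length_downFlags])).2 (by simpa using hr)
  have hs1 : sStat w (Y.length + 1) = k + 1 :=
    (sStat_eq_succ_iff hw (by omega) hB (by rw [length_upFlags])).2 hs
  refine ⟨w, ⟨hD, Y.length + 1, by rw [Finset.mem_Icc]; omega, by omega, hr1, hs1, ?_⟩, hA, hB⟩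
  rintro j hj ⟨h1, h2⟩
  rw [Finset.mem_Icc] at hj
  rw [rStat_pos_iff hw hj.1 (by omega), hA, pairUps] at h1
  rw [sStat_pos_iff hw hj.1 (by omega), hB, pairDowns] at h2
  rcases lt_trichotomy (j - 1) Y.length with hlt | heq | hgt
  · rw [List.getElem?_append_left (by rwa [length_downFlags])] at h1
    rw [List.getElem?_append_left (by rwa [length_upFlags])] at h2
    exact (flags_not_both h1 h2).elim
  · omega
  · obtain ⟨i, hi⟩ : ∃ i, j - 1 = Y.length + (i + 1) := ⟨j - 2 - Y.length, by omega⟩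
    rw [hi, List.getElem?_append_right (by rw [length_downFlags]; omega), length_downFlags,
      Nat.add_sub_cancel_left, List.getElem?_cons_succ,
      List.getElem?_append_left (by rw [length_downFlags]; omega)] at h1
    rw [hi, List.getElem?_append_right (by rw [length_upFlags]; omega), length_upFlags,
      Nat.add_sub_cancel_left, List.getElem?_cons_succ,
      List.getElem?_append_left (by rw [length_upFlags]; omega)] at h2
    exact (flags_not_both h1 h2).elim

theorem ncard_dyckRS_eq_ncard_starPairs {n : ℕ} (hn : 2 ≤ n) (k : ℕ) :
    (dyckRS n 1 (k + 1)).ncard = (starPairs k (n - 2)).ncard := by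
  have himage : (fun w => (upFollow true w, downFollow true w)) '' dyckRS n 1 (k + 1) =
      (fun P => (pairUps P.1 P.2, pairDowns P.1 P.2)) '' starPairs k (n - 2) := by
    ext ⟨α, β⟩
    constructor
    · rintro ⟨w, hw, he⟩
      obtain ⟨Y, Z, h, h1, h2⟩ := exists_starPair_of_mem_dyckRS hw
      exact ⟨(Y, Z), h, he ▸ by simp only [h1, h2]⟩
    · rintro ⟨⟨Y, Z⟩, h, he⟩
      obtain ⟨w, hw, h1, h2⟩ := exists_mem_dyckRS_of_starPair hn h
      exact ⟨w, hw, he ▸ by simp only [h1, h2]⟩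
  rw [← Set.InjOn.ncard_image (f := fun w => (upFollow true w, downFollow true w)), himage,
    Set.InjOn.ncard_image]
  · rintro ⟨Y, Z⟩ - ⟨Y', Z'⟩ - he
    rw [Prod.mk.injEq] at he ⊢
    exact pair_eq_of_flags_eq he.1 he.2
  · intro w hw v hv he
    rw [Prod.mk.injEq] at he
    exact eq_of_follow_eq
      ((headD_of_isDyckWord hw.1).trans (headD_of_isDyckWord hv.1).symm) he.1 he.2

/-- **Theorem (L = p, p an odd prime).** For a prime `p ≥ 3` and `n ≥ p`,
`|𝒟ₙᵖ| = 2·(T_{n-2,p-1} + Σ_{i=0}^{n-2-p} (i+1)·Mᵢ·T_{n-4-i,p-1})`. -/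
theorem dyck_L_eq_prime_count (p : ℕ) (hp : p.Prime) (hp3 : 3 ≤ p) (n : ℕ) (hn : p ≤ n) :
    ((dyckL n p).ncard : ℤ) =
      2 * (motzkinBallotZ ((n : ℤ) - 2) (p - 1) +
        ∑ i ∈ Finset.Icc (0 : ℤ) ((n : ℤ) - 2 - p),
          (i + 1) * motzkinZ i * motzkinBallotZ ((n : ℤ) - 4 - i) (p - 1)) := by
  rw [ncard_dyckL hp hp3, show p - 1 = p - 2 + 1 by omega,
    ncard_dyckRS_eq_ncard_starPairs (by omega), Nat.cast_mul, ncard_starPairs_eq_sum hp3 hn,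
    show p - 2 + 1 = p - 1 by omega]
  rfl
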